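/- There exists a constant C > 0 such that the following holds. Let w be a weighted graph on a finite vertex set V with |V| = n ≥ 3 whose support graph is connected, with m edges and Laplacian L, and let κ be a real with 1 ≤ κ ≤ m. Then there exists a weighted graph w' on V whose support is contained in the support of w (w'(u,v) > 0 implies w(u,v) > 0), having at most n − 1 + C · (m/κ) · (log n)² · (log log n)⁴ edges, whose Laplacian L' satisfies L ⪯ L' ⪯ 3κ · L in the Loewner order. -/

import Mathlib

/-! The sparsifier is a low-stretch spanning tree together with edges picked greedily by a barrier
argument. Throughout, `energy w T x = ∑ w(a,b) (x a - x b)²`, the sum over the edges of `T`, is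
the quadratic form of the Laplacian of the subgraph `T`, and the effective resistance between `a`
and `b` in `T` is handled through its variational form, as the least `ρ` with `(x a - x b)² ≤ ρ *
energy w T x` for all `x`.

**The tree** (`exists_lowStretch`, `exists_lowStretch_tree`). Edges have length `1 / w`. The tree
is built by a petal decomposition carried out one cut at a time. On a vertex set `X` with centre
`x₀`, take a shortest path from `x₀` to a far vertex `t`, halve the lengths along it, and let the
petal at level `s` consist of the vertices whose distance from `x₀` drops by at least `s`
(`PetalData`). The petal and its complement are treated recursively, with the first path vertex in
the petal as its centre, and their trees are joined by the path edge that enters the petal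
(`LowStretch.glue`). Distances to the centre in the complement do not change, and the detour
through the gate to a point of the petal is paid for by the halving, so resistances to the centre
stay within a factor `4` of the distances, however deep the recursion. For this, a halved path
remains the current path of its piece (`Stage`): while its target is at least half as far as the
farthest vertex, further petals are cut along it without halving it again, and otherwise it lies
in the complement of the next petal. Resistances to the targets of current paths stay within a
factor `2`. The level `s` comes from region growing (`exists_level`): averaging over a range of
levels, the weight of the cut times the radius is `O(log m)` times the number of edges meeting the
side with fewer edges. Charging the cut to that side costs a further logarithm (`cost_combine`),
which gives total stretch `S = O(m (log m)²)`.

**The extra edges** (`Potential.step`, `Potential.exists_controlling`, `exists_sparsifier`). Start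
from the inner product `B = κ L_T + J`, where `J` is the all-ones form; the sum of the squared
dual norms of the edge functionals off the tree is then at most `S / κ`. Repeatedly subtract `η`
times the Laplacian of the edges not yet chosen and then add one of them with weight about `κ`: by
the Sherman–Morrison formula and averaging there is an edge for which the potential does not grow,
provided `η (m + 2 S) ≤ κ`. After `k = ⌈(m + 2 S) / κ⌉` steps the barrier has come down by at
least `1`, and positivity of the form that is left says that the tree and the chosen edges `F`
satisfy `L ⪯ (κ + 1) L_{T ∪ F}`. As `T ∪ F` is a subgraph and `κ ≥ 1`, also `(κ + 1) L_{T ∪ F} ⪯ 3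
κ L`.

**Counting.** There are at most `n - 1 + k` edges and `k = O((m / κ) (log n)²)`. No power of `log
log n` is needed; since `log log n ≥ log log 3 > 0` for `n ≥ 3`, that factor can be inserted at
the price of a constant.
-/

open Matrix

namespace IncSparse

/-! ### Energies, shortest-path distances and shortest paths -/

section LowStretch
variable {V : Type*} [Fintype V] [DecidableEq V]

/-- The contribution `w(a,b) (x a - x b)²` of the edge `e = {a, b}` to the quadratic form of the
Laplacian, written with the representative `Quot.out e`. For symmetric `w` the representative does
not matter (`edgeForm_mk`). -/
noncomputable def edgeForm (w : V → V → ℝ) (x : V → ℝ) (e : Sym2 V) : ℝ :=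
  w (Quot.out e).1 (Quot.out e).2 * (x (Quot.out e).1 - x (Quot.out e).2) ^ 2

/-- The quadratic form at `x` of the Laplacian of the subgraph with edge set `T` and weights `w`. -/
noncomputable def energy (w : V → V → ℝ) (T : Finset (Sym2 V)) (x : V → ℝ) : ℝ :=
  ∑ e ∈ T, edgeForm w x e

omit [Fintype V] [DecidableEq V] in
lemma edgeForm_mk {w : V → V → ℝ} (hsym : ∀ u v, w u v = w v u) (x : V → ℝ) (a b : V) :
    edgeForm w x s(a, b) = w a b * (x a - x b) ^ 2 := by
  have h : s((Quot.out s(a, b)).1, (Quot.out s(a, b)).2) = s(a, b) := Quot.out_eq s(a, b)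
  unfold edgeForm
  rcases Sym2.eq_iff.1 h with ⟨h1, h2⟩ | ⟨h1, h2⟩
  · rw [h1, h2]
  · rw [h1, h2, hsym]; ring

omit [Fintype V] [DecidableEq V] in
lemma edgeForm_nonneg {w : V → V → ℝ} (hw : ∀ u v, 0 ≤ w u v) (x : V → ℝ) (e : Sym2 V) :
    0 ≤ edgeForm w x e := mul_nonneg (hw _ _) (sq_nonneg _)

omit [Fintype V] [DecidableEq V] in
lemma energy_nonneg {w : V → V → ℝ} (hw : ∀ u v, 0 ≤ w u v) (T : Finset (Sym2 V)) (x : V → ℝ) :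
    0 ≤ energy w T x := Finset.sum_nonneg fun e _ => edgeForm_nonneg hw x e

/-- `d` is, on `X`, the shortest-path distance from `x₀` within `X`, where the edges are the pairs
with `0 < w u v` and have length `ℓ u v`. For positive lengths the distance is characterised
by `d x₀ = 0`, the triangle inequality along edges, and the existence of a predecessor where that
inequality is tight. Values outside `X` are unconstrained. -/
structure IsDist (w ℓ : V → V → ℝ) (X : Finset V) (x₀ : V) (d : V → ℝ) : Prop where
  mem : x₀ ∈ X
  zero : d x₀ = 0
  lip : ∀ u ∈ X, ∀ v ∈ X, 0 < w u v → d v ≤ d u + ℓ u v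
  pred : ∀ v ∈ X, v ≠ x₀ → ∃ u ∈ X, 0 < w u v ∧ d v = d u + ℓ u v

/-- `P` is the vertex set of a path from `x₀` to `t` that is shortest for the distance `d`. Its
order is that of the (distinct) values of `d`; the last condition says that each vertex other than
`x₀` is joined by a tight edge to the one immediately before it. -/
structure IsPath (w ℓ : V → V → ℝ) (P : Finset V) (x₀ t : V) (d : V → ℝ) : Prop where
  mem_source : x₀ ∈ P
  mem_target : t ∈ P
  le_target : ∀ p ∈ P, d p ≤ d t
  inj : ∀ p ∈ P, ∀ q ∈ P, d p = d q → p = q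
  pred : ∀ p ∈ P, p ≠ x₀ → ∃ u ∈ P, 0 < w u p ∧ d p = d u + ℓ u p ∧
    ∀ r ∈ P, d r ≤ d u ∨ d p ≤ d r

omit [Fintype V] [DecidableEq V] in
/-- Comparison principle: a function that grows by at most the length along each edge lies below
one that has a predecessor at every vertex but `x₀`. A vertex of least `g` among those violating
the claim has a predecessor violating it as well. -/
lemma le_of_lip_of_pred {w ℓ : V → V → ℝ} {X : Finset V} {x₀ : V} {f g : V → ℝ}
    (hℓ : ∀ u ∈ X, ∀ v ∈ X, 0 < w u v → 0 < ℓ u v)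
    (h0 : f x₀ ≤ g x₀)
    (hf : ∀ u ∈ X, ∀ v ∈ X, 0 < w u v → f v ≤ f u + ℓ u v)
    (hg : ∀ v ∈ X, v ≠ x₀ → ∃ u ∈ X, 0 < w u v ∧ g u + ℓ u v ≤ g v) :
    ∀ v ∈ X, f v ≤ g v := by
  classical
  by_contra! hcon
  obtain ⟨v₁, hv₁, hlt₁⟩ := hcon
  obtain ⟨v, hv, hmin⟩ := (X.filter fun v => g v < f v).exists_min_image g
    ⟨v₁, by simp [hv₁, hlt₁]⟩
  rw [Finset.mem_filter] at hv
  have hne : v ≠ x₀ := by rintro rfl; linarith [hv.2]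
  obtain ⟨u, hu, hw, hle⟩ := hg v hv.1 hne
  have hpos := hℓ u hu v hv.1 hw
  have : f u ≤ g u := by
    by_contra! hc
    have := hmin u (by simp [hu, hc])
    linarith
  linarith [hf u hu v hv.1 hw, hv.2]

/-- Shortest-path distances exist as soon as some function `g` strictly decreases towards `x₀`, by
the edge length or more, from every other vertex to a neighbour; they lie below `g`. The distance
is obtained as the largest `1`-Lipschitz function vanishing at `x₀`, by compactness. -/
lemma exists_isDist {w ℓ : V → V → ℝ} {X : Finset V} {x₀ : V} {g : V → ℝ}
    (hℓ : ∀ u ∈ X, ∀ v ∈ X, 0 < w u v → 0 < ℓ u v) (hx₀ : x₀ ∈ X) (h0 : 0 ≤ g x₀)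
    (hg : ∀ v ∈ X, v ≠ x₀ → ∃ u ∈ X, 0 < w u v ∧ g u + ℓ u v ≤ g v)
    (hirr : ∀ u, w u u = 0) :
    ∃ d, IsDist w ℓ X x₀ d ∧ ∀ v ∈ X, d v ≤ g v := by
  classical
  have hg0 : ∀ v ∈ X, 0 ≤ g v :=
    le_of_lip_of_pred (f := fun _ => 0) hℓ h0
      (fun u hu v hv h => by simpa using (hℓ u hu v hv h).le) hg
  set K : Set (V → ℝ) := (Set.Icc 0 (fun v => max (g v) 0)) ∩ {f | f x₀ = 0} ∩
    {f | ∀ u ∈ X, ∀ v ∈ X, 0 < w u v → f v ≤ f u + ℓ u v} with hK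
  have hKc : IsCompact K := by
    have hc : IsClosed {f : V → ℝ | ∀ u ∈ X, ∀ v ∈ X, 0 < w u v → f v ≤ f u + ℓ u v} := by
      simp only [Set.ofPred_forall]
      refine isClosed_iInter fun u => isClosed_iInter fun _ => isClosed_iInter fun v =>
        isClosed_iInter fun _ => isClosed_iInter fun _ => ?_
      exact isClosed_le (continuous_apply v) ((continuous_apply u).add continuous_const)
    have hc2 : IsClosed {f : V → ℝ | f x₀ = 0} :=
      isClosed_eq (continuous_apply x₀) continuous_const
    exact (isCompact_Icc.inter_right hc2).inter_right hc
  have hKn : K.Nonempty := by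
    refine ⟨0, ⟨⟨le_refl _, fun v => le_max_right _ _⟩, rfl⟩, fun u hu v hv h => ?_⟩
    simpa using (hℓ u hu v hv h).le
  obtain ⟨f, hf, hmax⟩ := hKc.exists_isMaxOn hKn
    (f := fun f : V → ℝ => ∑ v, f v) (by fun_prop)
  have hlip := hf.2
  refine ⟨f, ⟨hx₀, hf.1.2, hlip, ?_⟩, le_of_lip_of_pred hℓ (by rw [hf.1.2]; exact h0) hlip hg⟩
  intro v hv hne
  by_contra! hcon
  have hlt : ∀ u ∈ X, 0 < w u v → f v < f u + ℓ u v := fun u hu hw =>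
    lt_of_le_of_ne (hlip u hu v hv hw) (hcon u hu hw)
  -- raise the value at `v` by a small amount
  obtain ⟨ε, hε, hεle⟩ : ∃ ε > 0, ∀ u ∈ X, 0 < w u v → f v + ε ≤ f u + ℓ u v := by
    obtain ⟨u₀, hu₀, hw₀, -⟩ := hg v hv hne
    obtain ⟨u, hu, hmin⟩ := (X.filter fun u => 0 < w u v).exists_min_image
      (fun u => f u + ℓ u v) ⟨u₀, by simp [hu₀, hw₀]⟩
    rw [Finset.mem_filter] at hu
    refine ⟨f u + ℓ u v - f v, by linarith [hlt u hu.1 hu.2], fun u' hu' hw' => ?_⟩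
    linarith [hmin u' (by simp [hu', hw'])]
  set f' := Function.update f v (f v + ε) with hf'
  have hv' : f' v = f v + ε := by simp [hf']
  have hother : ∀ u, u ≠ v → f' u = f u := fun u hu => by simp [hf', hu]
  have hlip' : ∀ u ∈ X, ∀ v ∈ X, 0 < w u v → f' v ≤ f' u + ℓ u v := by
    intro a ha b hb hw
    by_cases hav : a = v
    · subst hav
      have hab : b ≠ a := by rintro rfl; simp [hirr] at hw
      rw [hother b hab, hv']; linarith [hlip a ha b hb hw]
    · rw [hother a hav]
      by_cases hbv : b = v
      · subst hbv; rw [hv']; exact hεle a ha hw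
      · rw [hother b hbv]; exact hlip a ha b hb hw
  have h0' : f' x₀ = 0 := by rw [hother x₀ hne.symm]; exact hf.1.2
  have hle' := le_of_lip_of_pred hℓ (by rw [h0']; exact h0) hlip' hg
  have hmem : f' ∈ K := by
    refine ⟨⟨⟨fun u => ?_, fun u => ?_⟩, h0'⟩, hlip'⟩
    · by_cases huv : u = v
      · subst huv; rw [hv']; have := hf.1.1.1 u; simp at this ⊢; linarith
      · rw [hother u huv]; exact hf.1.1.1 u
    · by_cases huv : u = v
      · subst huv; exact (hle' u hv).trans (le_max_left _ _)
      · rw [hother u huv]; exact hf.1.1.2 u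
  have h1 := hmax hmem
  have h2 : ∑ u, f u < ∑ u, f' u := by
    refine Finset.sum_lt_sum (fun u _ => ?_) ⟨v, Finset.mem_univ _, by rw [hv']; linarith⟩
    by_cases huv : u = v
    · subst huv; rw [hv']; linarith
    · rw [hother u huv]
  simp only [Set.mem_ofPred_eq] at h1
  linarith

omit [Fintype V] [DecidableEq V] in
lemma IsDist.nonneg {w ℓ : V → V → ℝ} {X : Finset V} {x₀ : V} {d : V → ℝ}
    (hd : IsDist w ℓ X x₀ d) (hℓ : ∀ u ∈ X, ∀ v ∈ X, 0 < w u v → 0 < ℓ u v) :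
    ∀ v ∈ X, 0 ≤ d v :=
  le_of_lip_of_pred (f := fun _ => 0) hℓ hd.zero.ge
    (fun u hu v hv h => by simpa using (hℓ u hu v hv h).le)
    (fun v hv hne => by
      obtain ⟨u, hu, hw, he⟩ := hd.pred v hv hne
      exact ⟨u, hu, hw, he.ge⟩)

omit [Fintype V] [DecidableEq V] in
lemma IsDist.pos {w ℓ : V → V → ℝ} {X : Finset V} {x₀ : V} {d : V → ℝ}
    (hd : IsDist w ℓ X x₀ d) (hℓ : ∀ u ∈ X, ∀ v ∈ X, 0 < w u v → 0 < ℓ u v)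
    {v : V} (hv : v ∈ X) (hne : v ≠ x₀) : 0 < d v := by
  obtain ⟨u, hu, hw, he⟩ := hd.pred v hv hne
  linarith [hd.nonneg hℓ u hu, hℓ u hu v hv hw]

omit [Fintype V] in
lemma IsDist.exists_isPath {w ℓ : V → V → ℝ} {X : Finset V} {x₀ : V} {d : V → ℝ}
    (hd : IsDist w ℓ X x₀ d) (hℓ : ∀ u ∈ X, ∀ v ∈ X, 0 < w u v → 0 < ℓ u v) :
    ∀ z ∈ X, ∃ P ⊆ X, IsPath w ℓ P x₀ z d := by
  classical
  by_contra! hcon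
  obtain ⟨z₁, hz₁, hlt₁⟩ := hcon
  obtain ⟨z, hz, hmin⟩ := (X.filter fun z => ∀ P ⊆ X, ¬ IsPath w ℓ P x₀ z d).exists_min_image d
    ⟨z₁, by simpa [hz₁] using hlt₁⟩
  rw [Finset.mem_filter] at hz
  obtain ⟨hzX, hz⟩ := hz
  have hne : z ≠ x₀ := by
    rintro rfl
    refine hz {z} (by simpa using hzX) ⟨by simp, by simp, by simp, by simp, ?_⟩
    intro p hp hne
    exact absurd (by simpa using hp) hne
  obtain ⟨u, hu, hw, he⟩ := hd.pred z hzX hne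
  have hpos := hℓ u hu z hzX hw
  obtain ⟨P, hPX, hP⟩ : ∃ P ⊆ X, IsPath w ℓ P x₀ u d := by
    by_contra! hc
    have := hmin u (by simpa [hu] using hc)
    linarith
  have hlt : ∀ p ∈ P, d p < d z := fun p hp => by linarith [hP.le_target p hp]
  refine hz (insert z P) (by
    intro a ha
    rcases Finset.mem_insert.1 ha with rfl | ha
    · exact hzX
    · exact hPX ha) ⟨Finset.mem_insert_of_mem hP.mem_source, by simp, ?_, ?_, ?_⟩
  · intro p hp
    rcases Finset.mem_insert.1 hp with rfl | hp
    · exact le_rfl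
    · exact (hlt p hp).le
  · intro p hp r hr hpr
    rcases Finset.mem_insert.1 hp with rfl | hp' <;> rcases Finset.mem_insert.1 hr with rfl | hr'
    · rfl
    · linarith [hlt r hr']
    · linarith [hlt p hp']
    · exact hP.inj p hp' r hr' hpr
  · intro p hp hpne
    rcases Finset.mem_insert.1 hp with rfl | hp'
    · refine ⟨u, Finset.mem_insert_of_mem hP.mem_target, hw, he, fun r hr => ?_⟩
      rcases Finset.mem_insert.1 hr with rfl | hr
      · exact Or.inr le_rfl
      · exact Or.inl (hP.le_target r hr)
    · obtain ⟨a, ha, haw, hae, hall⟩ := hP.pred p hp' hpne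
      refine ⟨a, Finset.mem_insert_of_mem ha, haw, hae, fun r hr => ?_⟩
      rcases Finset.mem_insert.1 hr with rfl | hr'
      · exact Or.inr (hlt p hp').le
      · exact hall r hr'

end LowStretch

/-! ### Petals -/

section LowStretch
variable {V : Type*} [Fintype V] [DecidableEq V]

/-- The edge lengths `ℓ`, halved between any two vertices of `P`. -/
noncomputable def halve (P : Finset V) (ℓ : V → V → ℝ) (u v : V) : ℝ :=
  if u ∈ P ∧ v ∈ P then ℓ u v / 2 else ℓ u v

omit [Fintype V] in
lemma halve_bounds {P : Finset V} {ℓ : V → V → ℝ} {u v : V} (h : 0 < ℓ u v) :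
    ℓ u v / 2 ≤ halve P ℓ u v ∧ halve P ℓ u v ≤ ℓ u v := by
  unfold halve; split_ifs <;> constructor <;> linarith

omit [Fintype V] in
lemma halve_of_mem {P : Finset V} {ℓ : V → V → ℝ} {u v : V} (hu : u ∈ P) (hv : v ∈ P) :
    halve P ℓ u v = ℓ u v / 2 := by simp [halve, hu, hv]

omit [Fintype V] in
lemma halve_of_not_mem {P : Finset V} {ℓ : V → V → ℝ} {u v : V} (h : ¬ (u ∈ P ∧ v ∈ P)) :
    halve P ℓ u v = ℓ u v := by simp only [halve, h, if_false]

/-- The data from which petals are cut: the distance `d` from `x₀` in `X`, a shortest path `P` from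
`x₀` to `t`, and the distance `h` from `x₀` once the lengths inside `P` are halved. The difference
`d v - h v` is the *saving* at `v`, and the petal at level `s` is the set of `v` with saving at
least `s`. -/
structure PetalData (w ℓ : V → V → ℝ) (X : Finset V) (x₀ t : V) (P : Finset V)
    (d h : V → ℝ) : Prop where
  sym : ∀ u v, w u v = w v u
  lsym : ∀ u v, ℓ u v = ℓ v u
  pos : ∀ u ∈ X, ∀ v ∈ X, 0 < w u v → 0 < ℓ u v
  dist : IsDist w ℓ X x₀ d
  sub : P ⊆ X
  path : IsPath w ℓ P x₀ t d
  hdist : IsDist w (halve P ℓ) X x₀ h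

namespace PetalData
variable {w ℓ : V → V → ℝ} {X : Finset V} {x₀ t : V} {P : Finset V} {d h : V → ℝ}

lemma exists_of_path (sym : ∀ u v, w u v = w v u) (lsym : ∀ u v, ℓ u v = ℓ v u)
    (hirr : ∀ u, w u u = 0)
    (pos : ∀ u ∈ X, ∀ v ∈ X, 0 < w u v → 0 < ℓ u v) (hd : IsDist w ℓ X x₀ d)
    (sub : P ⊆ X) (path : IsPath w ℓ P x₀ t d) :
    ∃ h, PetalData w ℓ X x₀ t P d h := by
  have hpos : ∀ u ∈ X, ∀ v ∈ X, 0 < w u v → 0 < halve P ℓ u v := fun u hu v hv hw => by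
    have := pos u hu v hv hw
    linarith [(halve_bounds (P := P) this).1]
  obtain ⟨h, hh, -⟩ := exists_isDist (g := d) hpos hd.mem hd.zero.ge (fun v hv hne => by
    obtain ⟨u, hu, hw, he⟩ := hd.pred v hv hne
    refine ⟨u, hu, hw, ?_⟩
    linarith [(halve_bounds (P := P) (pos u hu v hv hw)).2]) hirr
  exact ⟨h, sym, lsym, pos, hd, sub, path, hh⟩

variable (D : PetalData w ℓ X x₀ t P d h)
include D

omit [Fintype V] in
lemma halve_pos : ∀ u ∈ X, ∀ v ∈ X, 0 < w u v → 0 < halve P ℓ u v := fun u hu v hv hw => by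
  have := D.pos u hu v hv hw
  linarith [(halve_bounds (P := P) this).1]

omit [Fintype V] in
lemma half_le : ∀ v ∈ X, d v / 2 ≤ h v := by
  refine le_of_lip_of_pred (f := fun v => d v / 2) (g := h) (x₀ := x₀) D.halve_pos
    (by simp [D.dist.zero, D.hdist.zero]) (fun u hu v hv hw => ?_) (fun v hv hne => ?_)
  · have := D.dist.lip u hu v hv hw
    have := (halve_bounds (P := P) (D.pos u hu v hv hw)).1
    linarith
  · obtain ⟨u, hu, hw, he⟩ := D.hdist.pred v hv hne
    exact ⟨u, hu, hw, he.ge⟩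

omit [Fintype V] in
/-- Along the path itself the distance is exactly halved, so the saving at `p ∈ P` is `d p / 2`. -/
lemma eq_half : ∀ p ∈ P, h p = d p / 2 := by
  intro p hp
  refine le_antisymm ?_ (D.half_le p (D.sub hp))
  refine le_of_lip_of_pred (X := P) (ℓ := halve P ℓ) (w := w) (x₀ := x₀) (g := fun v => d v / 2)
    (fun u hu v hv => D.halve_pos u (D.sub hu) v (D.sub hv))
    (by simp [D.dist.zero, D.hdist.zero])
    (fun u hu v hv hw => D.hdist.lip u (D.sub hu) v (D.sub hv) hw) (fun v hv hne => ?_) p hp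
  obtain ⟨u, hu, hw, he, -⟩ := D.path.pred v hv hne
  refine ⟨u, hu, hw, ?_⟩
  simp only [halve_of_mem hu hv]
  linarith

omit [Fintype V] in
/-- The saving changes by at most twice the length along an edge, so short edges are rarely cut. -/
lemma saving_lip {u v : V} (hu : u ∈ X) (hv : v ∈ X) (hw : 0 < w u v) :
    (d u - h u) - (d v - h v) ≤ 2 * ℓ u v := by
  have hw' : 0 < w v u := by rw [D.sym]; exact hw
  have h1 := D.dist.lip v hv u hu hw'
  have h2 := D.hdist.lip u hu v hv hw
  have h3 := (halve_bounds (P := P) (D.pos u hu v hv hw)).2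
  rw [D.lsym] at h1
  linarith

omit [Fintype V] in
/-- Removing a petal does not change the distances from `x₀` of the remaining vertices. -/
lemma dist_rest {s : ℝ} (hs : 0 < s) :
    IsDist w ℓ (X.filter fun v => d v - h v < s) x₀ d := by
  refine ⟨?_, D.dist.zero, ?_, ?_⟩
  · simp [D.dist.mem, D.dist.zero, D.hdist.zero, hs]
  · intro u hu v hv hw
    exact D.dist.lip u (Finset.mem_filter.1 hu).1 v (Finset.mem_filter.1 hv).1 hw
  · intro v hv hne
    obtain ⟨hv, hvs⟩ := Finset.mem_filter.1 hv
    obtain ⟨u, hu, hw, he⟩ := D.dist.pred v hv hne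
    refine ⟨u, Finset.mem_filter.2 ⟨hu, ?_⟩, hw, he⟩
    have h1 := D.hdist.lip u hu v hv hw
    have h3 := (halve_bounds (P := P) (D.pos u hu v hv hw)).2
    linarith

omit [Fintype V] in
/-- The edge of the path that enters the petal at level `s`: its end `x₁` is the first path vertex
in the petal, and `y` is the last one before the petal. -/
lemma exists_gate {s : ℝ} (hs : 0 < s) (hst : s ≤ d t / 2) :
    ∃ y ∈ P, ∃ x₁ ∈ P, 0 < w y x₁ ∧ d x₁ = d y + ℓ y x₁ ∧ d y < 2 * s ∧ 2 * s ≤ d x₁ ∧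
      (∀ p ∈ P, 2 * s ≤ d p → d x₁ ≤ d p) ∧ (∀ p ∈ P, d p < 2 * s → d p ≤ d y) := by
  obtain ⟨x₁, hx₁, hmin⟩ := (P.filter fun p => 2 * s ≤ d p).exists_min_image d
    ⟨t, Finset.mem_filter.2 ⟨D.path.mem_target, by linarith⟩⟩
  obtain ⟨hx₁, hx₁s⟩ := Finset.mem_filter.1 hx₁
  have hne : x₁ ≠ x₀ := by
    rintro rfl
    rw [D.dist.zero] at hx₁s; linarith
  obtain ⟨y, hy, hw, he, hall⟩ := D.path.pred x₁ hx₁ hne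
  have hpos := D.pos y (D.sub hy) x₁ (D.sub hx₁) hw
  refine ⟨y, hy, x₁, hx₁, hw, he, ?_, hx₁s, fun p hp hps => hmin p (by simp [hp, hps]), ?_⟩
  · by_contra! hc
    have := hmin y (by simp [hy, hc])
    linarith
  · intro p hp hps
    rcases hall p hp with h1 | h1
    · exact h1
    · linarith

omit [Fintype V] in
/-- Inside the petal, every vertex other than the centre `x₁` has a predecessor for `h` that also
lies in the petal: the previous vertex of the path, or, off the path, any predecessor, since the
saving does not increase along an edge that is tight for `h` and not halved. -/
lemma petal_pred {s : ℝ} {x₁ : V} (hx₁ : x₁ ∈ P) (hx₁s : 2 * s ≤ d x₁)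
    (hmin : ∀ p ∈ P, 2 * s ≤ d p → d x₁ ≤ d p) (hs : 0 < s) {v : V} (hv : v ∈ X)
    (hvs : s ≤ d v - h v) (hne : v ≠ x₁) :
    ∃ u ∈ X, s ≤ d u - h u ∧ 0 < w u v ∧ h v = h u + halve P ℓ u v ∧
      ((v ∈ P ∧ u ∈ P ∧ d v = d u + ℓ u v ∧ ∀ r ∈ P, d r ≤ d u ∨ d v ≤ d r) ∨ v ∉ P) := by
  by_cases hvP : v ∈ P
  · have h1 := D.eq_half v hvP
    have h2 := hmin v hvP (by linarith)
    have hne0 : v ≠ x₀ := by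
      rintro rfl
      rw [D.dist.zero] at h2; linarith
    obtain ⟨u, hu, hw, he, hall⟩ := D.path.pred v hvP hne0
    have h3 := D.eq_half u hu
    refine ⟨u, D.sub hu, ?_, hw, ?_, Or.inl ⟨hvP, hu, he, hall⟩⟩
    · rcases hall x₁ hx₁ with h4 | h4
      · linarith
      · exact absurd (D.path.inj v hvP x₁ hx₁ (le_antisymm h4 h2)) hne
    · rw [halve_of_mem hu hvP]; linarith
  · have hne0 : v ≠ x₀ := by
      rintro rfl
      exact hvP D.path.mem_source
    obtain ⟨u, hu, hw, he⟩ := D.hdist.pred v hv hne0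
    refine ⟨u, hu, ?_, hw, he, Or.inr hvP⟩
    rw [halve_of_not_mem (fun hc => hvP hc.2)] at he
    linarith [D.dist.lip u hu v hv hw]

omit [Fintype V] in
/-- For the halved lengths, distances from the centre `x₁` within the petal are differences of
`h`. -/
lemma dist_petal {s : ℝ} {x₁ : V} (hx₁ : x₁ ∈ P) (hx₁s : 2 * s ≤ d x₁)
    (hmin : ∀ p ∈ P, 2 * s ≤ d p → d x₁ ≤ d p) (hs : 0 < s) :
    IsDist w (halve P ℓ) (X.filter fun v => s ≤ d v - h v) x₁ (fun v => h v - h x₁) := by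
  have hx := D.eq_half x₁ hx₁
  refine ⟨?_, by simp, ?_, ?_⟩
  · refine Finset.mem_filter.2 ⟨D.sub hx₁, by linarith⟩
  · intro u hu v hv hw
    have := D.hdist.lip u (Finset.mem_filter.1 hu).1 v (Finset.mem_filter.1 hv).1 hw
    linarith
  · intro v hv hne
    obtain ⟨hv, hvs⟩ := Finset.mem_filter.1 hv
    obtain ⟨u, hu, hus, hw, he, -⟩ := D.petal_pred hx₁ hx₁s hmin hs hv hvs hne
    exact ⟨u, Finset.mem_filter.2 ⟨hu, hus⟩, hw, by linarith⟩

/-- Distances from the centre `x₁` within the petal for the original lengths: they exceed those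
for the halved lengths by no more than half the length of the path between `x₁` and `t`, and on
the path they are the differences of `d`. -/
lemma exists_dist_petal (hirr : ∀ u, w u u = 0) {s : ℝ} {x₁ : V} (hx₁ : x₁ ∈ P)
    (hx₁s : 2 * s ≤ d x₁) (hmin : ∀ p ∈ P, 2 * s ≤ d p → d x₁ ≤ d p) (hs : 0 < s) :
    ∃ d₁, IsDist w ℓ (X.filter fun v => s ≤ d v - h v) x₁ d₁ ∧
      (∀ v ∈ X, s ≤ d v - h v → d₁ v ≤ h v + d t / 2 - d x₁) ∧
      (∀ p ∈ P, 2 * s ≤ d p → d₁ p = d p - d x₁) := by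
  classical
  have hxmem := (D.dist_petal hx₁ hx₁s hmin hs).mem
  have hposA : ∀ u ∈ X.filter (fun v => s ≤ d v - h v), ∀ v ∈ X.filter (fun v => s ≤ d v - h v),
      0 < w u v → 0 < ℓ u v := fun u hu v hv =>
    D.pos u (Finset.mem_filter.1 hu).1 v (Finset.mem_filter.1 hv).1
  set g : V → ℝ := fun v => if v ∈ P then d v - d x₁ else h v + d t / 2 - d x₁ with hg
  have hgle : ∀ v, g v ≤ h v + d t / 2 - d x₁ := by
    intro v
    simp only [hg]
    split_ifs with hv
    · have := D.eq_half v hv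
      have := D.path.le_target v hv
      linarith
    · exact le_rfl
  obtain ⟨d₁, hd₁, hle⟩ := exists_isDist (w := w) (ℓ := ℓ) (g := g) hposA hxmem
    (by simp [hg, hx₁]) (by
      intro v hv hne
      obtain ⟨hv, hvs⟩ := Finset.mem_filter.1 hv
      obtain ⟨u, hu, hus, hw, he, hcase⟩ := D.petal_pred hx₁ hx₁s hmin hs hv hvs hne
      refine ⟨u, Finset.mem_filter.2 ⟨hu, hus⟩, hw, ?_⟩
      rcases hcase with ⟨hvP, huP, he', -⟩ | hvP
      · simp only [hg, hvP, huP, if_true]; linarith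
      · rw [halve_of_not_mem (fun hc => hvP hc.2)] at he
        have := hgle u
        have h2 : g v = h v + d t / 2 - d x₁ := by simp [hg, hvP]
        linarith) hirr
  refine ⟨d₁, hd₁, fun v hv hvs => (hle v (by simp [hv, hvs])).trans (hgle v), ?_⟩
  intro p hp hps
  have hpA : p ∈ X.filter (fun v => s ≤ d v - h v) :=
    Finset.mem_filter.2 ⟨D.sub hp, by linarith [D.eq_half p hp]⟩
  refine le_antisymm ((hle p hpA).trans (by simp [hg, hp])) ?_
  refine le_of_lip_of_pred (f := fun v => d v - d x₁) (x₀ := x₁) hposA (by simp [hd₁.zero])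
    (fun u hu v hv hw => ?_) (fun v hv hne => ?_) p hpA
  · have := D.dist.lip u (Finset.mem_filter.1 hu).1 v (Finset.mem_filter.1 hv).1 hw
    linarith
  · obtain ⟨u, hu, hw, he⟩ := hd₁.pred v hv hne
    exact ⟨u, hu, hw, he.ge⟩

omit [Fintype V] in
/-- The part of the path inside the petal is a shortest path from `x₁` to `t`, for lengths that
are on the path a constant multiple of the original ones. -/
lemma path_petal {s : ℝ} {x₁ : V} (hx₁ : x₁ ∈ P) (hx₁s : 2 * s ≤ d x₁)
    (hmin : ∀ p ∈ P, 2 * s ≤ d p → d x₁ ≤ d p) (hs : 0 < s) (hst : s ≤ d t / 2)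
    {c : ℝ} (hc : 0 < c) {ℓ' : V → V → ℝ} {d' : V → ℝ}
    (hℓ' : ∀ u ∈ P, ∀ v ∈ P, ℓ' u v = c * ℓ u v)
    (hd' : ∀ p ∈ P, 2 * s ≤ d p → d' p = c * (d p - d x₁)) :
    IsPath w ℓ' (P.filter fun p => 2 * s ≤ d p) x₁ t d' := by
  have hmono : ∀ p ∈ P, ∀ r ∈ P, 2 * s ≤ d p → 2 * s ≤ d r → d p ≤ d r → d' p ≤ d' r := by
    intro p hp r hr hps hrs hle
    rw [hd' p hp hps, hd' r hr hrs]
    exact mul_le_mul_of_nonneg_left (by linarith) hc.le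
  have ht := D.path.mem_target
  have hts : 2 * s ≤ d t := by linarith
  refine ⟨by simp [hx₁, hx₁s], Finset.mem_filter.2 ⟨ht, hts⟩, ?_, ?_, ?_⟩
  · intro p hp
    obtain ⟨hp, hps⟩ := Finset.mem_filter.1 hp
    exact hmono p hp t ht hps hts (D.path.le_target p hp)
  · intro p hp r hr he
    obtain ⟨hp, hps⟩ := Finset.mem_filter.1 hp
    obtain ⟨hr, hrs⟩ := Finset.mem_filter.1 hr
    rw [hd' p hp hps, hd' r hr hrs] at he
    refine D.path.inj p hp r hr ?_
    have := mul_left_cancel₀ hc.ne' he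
    linarith
  · intro p hp hne
    obtain ⟨hp, hps⟩ := Finset.mem_filter.1 hp
    have hph := D.eq_half p hp
    obtain ⟨u, hu, hus, hw, he, hcase⟩ :=
      D.petal_pred hx₁ hx₁s hmin hs (D.sub hp) (by linarith) hne
    rcases hcase with ⟨-, huP, he', hall⟩ | hvP
    · have huh := D.eq_half u huP
      have hus' : 2 * s ≤ d u := by linarith
      refine ⟨u, Finset.mem_filter.2 ⟨huP, hus'⟩, hw, ?_, ?_⟩
      · rw [hd' p hp hps, hd' u huP hus', hℓ' u huP p hp, he']; ring
      · intro r hr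
        obtain ⟨hr, hrs⟩ := Finset.mem_filter.1 hr
        exact (hall r hr).imp (hmono r hr u huP hrs hus') (hmono p hp r hr hps hrs)
    · exact absurd hp hvP

omit [Fintype V] in
/-- The part of the path outside the petal is a shortest path from `x₀` to the gate `y`. -/
lemma path_rest {s : ℝ} (hs : 0 < s) {y : V} (hy : y ∈ P) (hys : d y < 2 * s)
    (hmax : ∀ p ∈ P, d p < 2 * s → d p ≤ d y) :
    IsPath w ℓ (P.filter fun p => d p < 2 * s) x₀ y d := by
  refine ⟨by simp [D.path.mem_source, D.dist.zero, hs], by simp [hy, hys], ?_, ?_, ?_⟩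
  · intro p hp
    obtain ⟨hp, hps⟩ := Finset.mem_filter.1 hp
    exact hmax p hp hps
  · intro p hp r hr he
    exact D.path.inj p (Finset.mem_filter.1 hp).1 r (Finset.mem_filter.1 hr).1 he
  · intro p hp hne
    obtain ⟨hp, hps⟩ := Finset.mem_filter.1 hp
    obtain ⟨u, hu, hw, he, hall⟩ := D.path.pred p hp hne
    have hpos := D.pos u (D.sub hu) p (D.sub hp) hw
    exact ⟨u, Finset.mem_filter.2 ⟨hu, by linarith⟩, hw, he,
      fun r hr => hall r (Finset.mem_filter.1 hr).1⟩

end PetalData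
end LowStretch

/-! ### Region growing -/

section Region

/-- If `s` is uniform on `(a, b]`, an interval `(lo i, hi i]` of length at most `len i` contains
it with probability at most `len i / (b - a)`. Hence for some level the intervals containing it
have total weight at most `|I| / (b - a)`, where the weight of `i` is `1 / len i`. -/
lemma exists_light_cut {ι : Type*} (I : Finset ι) (lo hi len : ι → ℝ) {a b : ℝ} (hab : a < b)
    (hpos : ∀ i ∈ I, 0 < len i) (hlen : ∀ i ∈ I, hi i - lo i ≤ len i) :
    ∃ s ∈ Set.Ioc a b, ∑ i ∈ I with lo i < s ∧ s ≤ hi i, (len i)⁻¹ ≤ (I.card : ℝ) / (b - a) := by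
  classical
  set F : ℝ → ℝ := fun s => ∑ i ∈ I, (Set.Ioc (lo i) (hi i)).indicator (fun _ => (len i)⁻¹) s
    with hF
  have hint : ∀ i ∈ I, MeasureTheory.IntegrableOn
      ((Set.Ioc (lo i) (hi i)).indicator (fun _ => (len i)⁻¹)) (Set.Ioc a b) := fun i _ =>
    (MeasureTheory.integrableOn_const (by simp)).indicator measurableSet_Ioc
  have hFint : MeasureTheory.IntegrableOn F (Set.Ioc a b) :=
    MeasureTheory.integrable_finsetSum I hint
  obtain ⟨s, hs, hle⟩ := MeasureTheory.exists_le_setAverage (μ := MeasureTheory.volume)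
    (by simpa using hab) (by simp) hFint
  refine ⟨s, hs, ?_⟩
  have h1 : ∑ i ∈ I with lo i < s ∧ s ≤ hi i, (len i)⁻¹ = F s := by
    simp only [hF, Finset.sum_filter, Set.indicator_apply, Set.mem_Ioc]
  rw [h1]
  refine hle.trans ?_
  rw [MeasureTheory.setAverage_eq, hF, MeasureTheory.integral_finsetSum I hint]
  have h2 : ∀ i ∈ I, ∫ s in Set.Ioc a b,
      (Set.Ioc (lo i) (hi i)).indicator (fun _ => (len i)⁻¹) s ≤ 1 := by
    intro i hi'
    have hl := hpos i hi'
    rw [MeasureTheory.integral_indicator measurableSet_Ioc, MeasureTheory.setIntegral_const,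
      smul_eq_mul, ← div_eq_mul_inv, div_le_one hl]
    have hle : (MeasureTheory.volume.restrict (Set.Ioc a b)).real (Set.Ioc (lo i) (hi i)) ≤
        max (hi i - lo i) 0 := by
      rw [← Real.volume_real_Ioc]
      exact ENNReal.toReal_mono (by simp) (MeasureTheory.Measure.restrict_apply_le _ _)
    exact hle.trans (max_le (hlen i hi') hl.le)
  have h3 := Finset.sum_le_sum h2
  rw [Finset.sum_const, nsmul_eq_mul, mul_one] at h3
  rw [smul_eq_mul, Real.volume_real_Ioc_of_le hab.le, div_eq_inv_mul]
  exact mul_le_mul_of_nonneg_left h3 (by simpa using hab.le)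

/-- A sequence starting below `2 ^ k` cannot more than halve in each of `k` steps and stay
positive. -/
lemma exists_no_doubling (m : ℕ → ℕ) (k : ℕ) (h1 : 1 ≤ m k) (h2 : m 0 < 2 ^ k) :
    ∃ i < k, m i ≤ 2 * m (i + 1) := by
  by_contra! hcon
  have : ∀ j ≤ k, 2 ^ j * m j ≤ m 0 := by
    intro j hj
    induction j with
    | zero => simp
    | succ j ih =>
      have := hcon j (by omega)
      have h3 := ih (by omega)
      calc 2 ^ (j + 1) * m (j + 1) = 2 ^ j * (2 * m (j + 1)) := by ring
        _ ≤ 2 ^ j * m j := Nat.mul_le_mul_left _ this.le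
        _ ≤ m 0 := h3
  have h3 := this k le_rfl
  have : 2 ^ k * 1 ≤ 2 ^ k * m k := Nat.mul_le_mul_left _ h1
  omega

/-- Region growing. When the index set depends monotonically on the level and its size stays
between `1` and `2 ^ k`, cut `(a, b]` into `k` equal parts. On one of them the size at most
doubles, and averaging there bounds the cut in terms of the size at the level found. The two
alternatives of `hI` are for an index set that shrinks, respectively grows, with the level. -/
lemma region_growing {ι : Type*} (lo hi len : ι → ℝ) (I : ℝ → Finset ι) {a b : ℝ} (hab : a < b)
    {k : ℕ} (hpos : ∀ s, ∀ i ∈ I s, 0 < len i) (hlen : ∀ s, ∀ i ∈ I s, hi i - lo i ≤ len i)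
    (hI : Antitone I ∧ 1 ≤ (I b).card ∧ (I a).card < 2 ^ k ∨
      Monotone I ∧ 1 ≤ (I a).card ∧ (I b).card < 2 ^ k) :
    ∃ s ∈ Set.Ioc a b,
      ∑ i ∈ I s with lo i < s ∧ s ≤ hi i, (len i)⁻¹ ≤ 2 * k * (I s).card / (b - a) := by
  classical
  have hk : 0 < k := by
    rcases Nat.eq_zero_or_pos k with rfl | hk
    · exfalso
      rcases hI with ⟨hm, h1, h2⟩ | ⟨hm, h1, h2⟩
      · have := Finset.card_le_card (hm hab.le); simp at h2; simp [h2] at this; simp [this] at h1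
      · have := Finset.card_le_card (hm hab.le); simp at h2; simp [h2] at this; simp [this] at h1
    · exact hk
  have hk' : (0 : ℝ) < k := by exact_mod_cast hk
  have hba : 0 < b - a := by linarith
  -- the `k` equal subintervals of `(a, b]`
  set g : ℕ → ℝ := fun i => a + i * ((b - a) / k) with hg
  have hg0 : g 0 = a := by simp [hg]
  have hgk : g k = b := by simp only [hg]; field_simp; ring
  have hstep : ∀ i, g (i + 1) - g i = (b - a) / k := by intro i; simp only [hg]; push_cast; ring
  have hlt : ∀ i, g i < g (i + 1) := fun i => by
    have := hstep i
    have : 0 < (b - a) / k := by positivity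
    linarith
  have hmono : Monotone g := monotone_nat_of_le_succ fun i => (hlt i).le
  -- on a subinterval where the index set does not double, averaging gives the level
  have key : ∀ (i : ℕ) (J : Finset ι), i < k → (∃ s, J ⊆ I s) →
      (∀ s ∈ Set.Ioc (g i) (g (i + 1)), I s ⊆ J ∧ J.card ≤ 2 * (I s).card) →
      ∃ s ∈ Set.Ioc a b,
        ∑ i ∈ I s with lo i < s ∧ s ≤ hi i, (len i)⁻¹ ≤ 2 * k * (I s).card / (b - a) := by
    rintro i J hi' ⟨s₀, hs₀⟩ hJ
    obtain ⟨s, hs, hle⟩ := exists_light_cut J lo hi len (hlt i)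
      (fun i hi => hpos s₀ i (hs₀ hi)) (fun i hi => hlen s₀ i (hs₀ hi))
    refine ⟨s, ⟨?_, ?_⟩, ?_⟩
    · have := hmono (Nat.zero_le i); rw [hg0] at this; exact this.trans_lt hs.1
    · have := hmono (show i + 1 ≤ k by omega); rw [hgk] at this; exact hs.2.trans this
    · obtain ⟨hsub, hcard⟩ := hJ s hs
      have h1 : ∑ i ∈ I s with lo i < s ∧ s ≤ hi i, (len i)⁻¹ ≤
          ∑ i ∈ J with lo i < s ∧ s ≤ hi i, (len i)⁻¹ :=
        Finset.sum_le_sum_of_subset_of_nonneg (Finset.filter_subset_filter _ hsub)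
          fun i hi _ => inv_nonneg.2 (hpos s₀ i (hs₀ (Finset.mem_filter.1 hi).1)).le
      have hcard' : (J.card : ℝ) ≤ 2 * (I s).card := by exact_mod_cast hcard
      refine h1.trans (hle.trans ?_)
      rw [hstep, div_div_eq_mul_div]
      exact div_le_div_of_nonneg_right (by nlinarith) hba.le
  rcases hI with ⟨hm, h1, h2⟩ | ⟨hm, h1, h2⟩
  · obtain ⟨i, hi', hle⟩ := exists_no_doubling (fun i => (I (g i)).card) k
      (by simpa only [hgk] using h1) (by simpa only [hg0] using h2)
    refine key i (I (g i)) hi' ⟨_, subset_rfl⟩ fun s hs => ⟨hm hs.1.le, ?_⟩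
    have := Finset.card_le_card (hm hs.2)
    omega
  · obtain ⟨i, hi', hle⟩ := exists_no_doubling (fun i => (I (g (k - i))).card) k
      (by simpa only [Nat.sub_self, hg0] using h1) (by simpa only [Nat.sub_zero, hgk] using h2)
    refine key (k - (i + 1)) (I (g (k - i))) (by omega) ⟨_, subset_rfl⟩ fun s hs => ?_
    rw [show k - (i + 1) + 1 = k - i by omega] at hs
    refine ⟨hm hs.2, ?_⟩
    have := Finset.card_le_card (hm hs.1.le)
    omega

end Region

/-! ### Choosing the level of a petal -/

section LowStretch
variable {V : Type*} [Fintype V] [DecidableEq V]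

/-- The number of ordered pairs in `X × Y` that are edges. In particular `numPairs w X X` is twice
the number of edges inside `X`. -/
noncomputable def numPairs (w : V → V → ℝ) (X Y : Finset V) : ℕ :=
  ((X ×ˢ Y).filter fun p => 0 < w p.1 p.2).card

omit [Fintype V] [DecidableEq V] in
lemma numPairs_eq (w : V → V → ℝ) (X Y : Finset V) :
    numPairs w X Y = ∑ u ∈ X, ∑ v ∈ Y, if 0 < w u v then 1 else 0 := by
  rw [numPairs, Finset.card_filter, Finset.sum_product]

omit [Fintype V] [DecidableEq V] in
lemma numPairs_comm {w : V → V → ℝ} (hsym : ∀ u v, w u v = w v u) (X Y : Finset V) :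
    numPairs w X Y = numPairs w Y X := by
  rw [numPairs_eq, numPairs_eq, Finset.sum_comm]
  simp only [hsym]

omit [Fintype V] in
lemma numPairs_union_left (w : V → V → ℝ) {A B : Finset V} (h : Disjoint A B) (Y : Finset V) :
    numPairs w (A ∪ B) Y = numPairs w A Y + numPairs w B Y := by
  simp only [numPairs_eq, Finset.sum_union h]

omit [Fintype V] in
lemma numPairs_union_right (w : V → V → ℝ) {A B : Finset V} (h : Disjoint A B) (Y : Finset V) :
    numPairs w Y (A ∪ B) = numPairs w Y A + numPairs w Y B := by
  simp only [numPairs_eq, Finset.sum_union h, Finset.sum_add_distrib]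

omit [Fintype V] [DecidableEq V] in
lemma numPairs_mono (w : V → V → ℝ) {A A' B B' : Finset V} (h : A ⊆ A') (h' : B ⊆ B') :
    numPairs w A B ≤ numPairs w A' B' :=
  Finset.card_le_card (Finset.filter_subset_filter _ (Finset.product_subset_product h h'))

omit [Fintype V] in
lemma numPairs_split {w : V → V → ℝ} (hsym : ∀ u v, w u v = w v u) {A B : Finset V}
    (h : Disjoint A B) :
    numPairs w (A ∪ B) (A ∪ B) = numPairs w A A + numPairs w B B + 2 * numPairs w A B := by
  rw [numPairs_union_left w h, numPairs_union_right w h, numPairs_union_right w h,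
    numPairs_comm hsym B A]
  ring

namespace PetalData
variable {w ℓ : V → V → ℝ} {X : Finset V} {x₀ t : V} {P : Finset V} {d h : V → ℝ}

omit [Fintype V] in
/-- The level at which a petal is cut. The weight of the cut between the petal `A` and the rest
`B` is charged to a side holding at most half of the edge pairs: if the petal at the middle level
`3 d(t) / 8` is such a side, levels above the middle are used, and otherwise levels below it. The
constants are arranged for the use of the bound in `LowStretch.glue`. -/
lemma exists_level (D : PetalData w ℓ X x₀ t P d h) (hw : ∀ u v, 0 ≤ w u v)
    (hℓw : ∀ u ∈ X, ∀ v ∈ X, 0 < w u v → ℓ u v ≤ (w u v)⁻¹)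
    {k : ℕ} (hk : numPairs w X X < 2 ^ k) {R : ℝ} (hR : 0 < R) (hRt : R / 2 ≤ d t) :
    ∃ s, d t / 4 < s ∧ s ≤ d t / 2 ∧ ∃ A B, A = X.filter (fun v => s ≤ d v - h v) ∧
      B = X.filter (fun v => d v - h v < s) ∧
      ((2 * numPairs w A A ≤ numPairs w X X ∧
        16 * R * ∑ u ∈ A, ∑ v ∈ B, w u v ≤ 1024 * k * (numPairs w A A + numPairs w A B)) ∨
       (2 * numPairs w B B ≤ numPairs w X X ∧
        16 * R * ∑ u ∈ A, ∑ v ∈ B, w u v ≤ 1024 * k * (numPairs w B B + numPairs w A B))) := by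
  classical
  set σ : V → ℝ := fun v => d v - h v with hσ
  set A : ℝ → Finset V := fun s => X.filter fun v => s ≤ σ v with hA
  set B : ℝ → Finset V := fun s => X.filter fun v => σ v < s with hB
  have hdis : ∀ s, Disjoint (A s) (B s) := fun s => by
    rw [Finset.disjoint_left]
    intro v h1 h2
    exact absurd (Finset.mem_filter.1 h1).2 (not_le.2 (Finset.mem_filter.1 h2).2)
  have hun : ∀ s, A s ∪ B s = X := fun s => by
    ext v
    simp only [hA, hB, Finset.mem_union, Finset.mem_filter]
    have := le_or_gt s (σ v)
    tauto
  have hsplit : ∀ s, numPairs w X X =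
      numPairs w (A s) (A s) + numPairs w (B s) (B s) + 2 * numPairs w (A s) (B s) := fun s => by
    rw [← numPairs_split D.sym (hdis s), hun]
  have hAanti : Antitone A := fun s s' hss v hv => by
    obtain ⟨h1, h2⟩ := Finset.mem_filter.1 hv
    exact Finset.mem_filter.2 ⟨h1, hss.trans h2⟩
  have hBmono : Monotone B := fun s s' hss v hv => by
    obtain ⟨h1, h2⟩ := Finset.mem_filter.1 hv
    exact Finset.mem_filter.2 ⟨h1, h2.trans_le hss⟩
  set pr : Finset V → Finset V → Finset (V × V) :=
    fun Y Z => (Y ×ˢ Z).filter fun p => 0 < w p.1 p.2 with hpr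
  have hprX : ∀ Y ⊆ X, ∀ Z ⊆ X, ∀ p ∈ pr Y Z, p.1 ∈ X ∧ p.2 ∈ X ∧ 0 < w p.1 p.2 := by
    intro Y hY Z hZ p hp
    obtain ⟨h1, h2⟩ := Finset.mem_filter.1 hp
    obtain ⟨h3, h4⟩ := Finset.mem_product.1 h1
    exact ⟨hY h3, hZ h4, h2⟩
  have hAX : ∀ s, A s ⊆ X := fun s => Finset.filter_subset _ _
  have hBX : ∀ s, B s ⊆ X := fun s => Finset.filter_subset _ _
  have hlenpos : ∀ p : V × V, p.1 ∈ X ∧ p.2 ∈ X ∧ 0 < w p.1 p.2 → 0 < 2 * (w p.1 p.2)⁻¹ :=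
    fun p hp => by have := hp.2.2; positivity
  have hlen : ∀ p : V × V, p.1 ∈ X ∧ p.2 ∈ X ∧ 0 < w p.1 p.2 →
      σ p.1 - σ p.2 ≤ 2 * (w p.1 p.2)⁻¹ := fun p hp => by
    have h1 := D.saving_lip hp.1 hp.2.1 hp.2.2
    have h2 := hℓw _ hp.1 _ hp.2.1 hp.2.2
    simp only [hσ]; linarith
  have hdt : 0 < d t := by linarith
  have ht : t ∈ X := D.sub D.path.mem_target
  have hσt : σ t = d t / 2 := by
    simp only [hσ]; rw [D.eq_half t D.path.mem_target]; ring
  -- the weight of the cut, read off from the region-growing sum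
  have hcut : ∀ (s : ℝ) (J : Finset (V × V)), pr (A s) (B s) ⊆ J →
      J ⊆ pr X X →
      ∑ u ∈ A s, ∑ v ∈ B s, w u v / 2 ≤
        ∑ p ∈ J with σ p.2 < s ∧ s ≤ σ p.1, (2 * (w p.1 p.2)⁻¹)⁻¹ := by
    intro s J hJ hJX
    have h1 : ∑ u ∈ A s, ∑ v ∈ B s, w u v / 2 =
        ∑ p ∈ pr (A s) (B s), (2 * (w p.1 p.2)⁻¹)⁻¹ := by
      rw [← Finset.sum_product (f := fun p : V × V => w p.1 p.2 / 2), hpr, Finset.sum_filter]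
      refine Finset.sum_congr rfl fun p _ => ?_
      split_ifs with hp
      · rw [mul_inv, inv_inv]; ring
      · have := le_antisymm (not_lt.1 hp) (hw _ _)
        simp [this]
    rw [h1]
    refine Finset.sum_le_sum_of_subset_of_nonneg (fun p hp => ?_) fun p hp _ => ?_
    · refine Finset.mem_filter.2 ⟨hJ hp, ?_⟩
      obtain ⟨h3, h4⟩ := Finset.mem_product.1 (Finset.mem_filter.1 hp).1
      exact ⟨(Finset.mem_filter.1 h4).2, (Finset.mem_filter.1 h3).2⟩
    · exact inv_nonneg.2 (hlenpos p
        (hprX X subset_rfl X subset_rfl p (hJX (Finset.mem_filter.1 hp).1))).le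
  have hfinal : ∀ (s : ℝ) (M : ℕ), ∑ u ∈ A s, ∑ v ∈ B s, w u v / 2 ≤ 2 * k * M / (d t / 8) →
      16 * R * ∑ u ∈ A s, ∑ v ∈ B s, w u v ≤ 1024 * k * M := by
    intro s M hle
    simp only [← Finset.sum_div] at hle
    set W := ∑ u ∈ A s, ∑ v ∈ B s, w u v with hW
    have hW0 : 0 ≤ W := Finset.sum_nonneg fun _ _ => Finset.sum_nonneg fun _ _ => hw _ _
    rw [le_div_iff₀ (by linarith)] at hle
    have : R * W ≤ 2 * d t * W := mul_le_mul_of_nonneg_right (by linarith) hW0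
    linarith
  have hprmono : ∀ {Y Y' Z Z' : Finset V}, Y ⊆ Y' → Z ⊆ Z' → pr Y Z ⊆ pr Y' Z' :=
    fun h1 h2 => Finset.filter_subset_filter _ (Finset.product_subset_product h1 h2)
  by_cases hhalf : 2 * numPairs w (A (3 * d t / 8)) (A (3 * d t / 8)) ≤ numPairs w X X
  · -- grow the petal side
    obtain ⟨s, hs, hle⟩ := region_growing (k := k) (fun p : V × V => σ p.2) (fun p => σ p.1)
      (fun p => 2 * (w p.1 p.2)⁻¹) (fun s => pr (A s) X)
      (a := 3 * d t / 8) (b := d t / 2) (by linarith)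
      (fun s p hp => hlenpos p (hprX _ (hAX s) X subset_rfl p hp))
      (fun s p hp => hlen p (hprX _ (hAX s) X subset_rfl p hp))
      (Or.inl ⟨fun s s' hss => hprmono (hAanti hss) subset_rfl, by
        have hne : t ≠ x₀ := by rintro rfl; rw [D.dist.zero] at hdt; exact lt_irrefl _ hdt
        obtain ⟨u, hu, hwu, -⟩ := D.dist.pred t ht hne
        refine Finset.card_pos.2 ⟨(t, u), Finset.mem_filter.2 ⟨Finset.mem_product.2
          ⟨Finset.mem_filter.2 ⟨ht, hσt.ge⟩, hu⟩, ?_⟩⟩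
        rw [D.sym]; exact hwu,
        (numPairs_mono w (hAX _) subset_rfl).trans_lt hk⟩)
    refine ⟨s, by linarith [hs.1], hs.2, A s, B s, rfl, rfl, Or.inl ⟨?_, ?_⟩⟩
    · have := numPairs_mono w (hAanti hs.1.le) (hAanti hs.1.le)
      omega
    · have h1 := (hcut s _ (hprmono subset_rfl (hBX s)) (hprmono (hAX s) subset_rfl)).trans hle
      have h2 : (pr (A s) X).card = numPairs w (A s) (A s) + numPairs w (A s) (B s) := by
        rw [← numPairs_union_right w (hdis s), hun]; rfl
      rw [h2, show d t / 2 - 3 * d t / 8 = d t / 8 by ring] at h1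
      exact_mod_cast hfinal s _ h1
  · -- grow the complement
    obtain ⟨s, hs, hle⟩ := region_growing (k := k) (fun p : V × V => σ p.2) (fun p => σ p.1)
      (fun p => 2 * (w p.1 p.2)⁻¹) (fun s => pr X (B s))
      (a := d t / 4) (b := 3 * d t / 8) (by linarith)
      (fun s p hp => hlenpos p (hprX X subset_rfl _ (hBX s) p hp))
      (fun s p hp => hlen p (hprX X subset_rfl _ (hBX s) p hp))
      (Or.inr ⟨fun s s' hss => hprmono subset_rfl (hBmono hss), by
        obtain ⟨y, hy, x₁, hx₁, hwy, -, hys, -⟩ :=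
          D.exists_gate (s := d t / 4) (by linarith) (by linarith)
        have hyh := D.eq_half y hy
        refine Finset.card_pos.2 ⟨(x₁, y), Finset.mem_filter.2 ⟨Finset.mem_product.2
          ⟨D.sub hx₁, Finset.mem_filter.2 ⟨D.sub hy, ?_⟩⟩, ?_⟩⟩
        · simp only [hσ]; linarith
        · rw [D.sym]; exact hwy,
        (numPairs_mono w subset_rfl (hBX _)).trans_lt hk⟩)
    refine ⟨s, hs.1, by linarith [hs.2], A s, B s, rfl, rfl, Or.inr ⟨?_, ?_⟩⟩
    · have := numPairs_mono w (hBmono hs.2) (hBmono hs.2)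
      have := hsplit (3 * d t / 8)
      omega
    · have h1 := (hcut s _ (hprmono (hAX s) subset_rfl) (hprmono subset_rfl (hBX s))).trans hle
      have h2 : (pr X (B s)).card = numPairs w (B s) (B s) + numPairs w (A s) (B s) := by
        rw [add_comm, ← numPairs_union_left w (hdis s), hun]; rfl
      rw [h2, show 3 * d t / 8 - d t / 4 = d t / 8 by ring] at h1
      exact_mod_cast hfinal s _ h1

end PetalData
end LowStretch

/-! ### Gluing two low-stretch trees -/

section LowStretch
variable {V : Type*} [Fintype V] [DecidableEq V]

/-- The effective resistance between `a` and `b` in the graph `T` is at most `ρ`, in variational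
form. -/
def ResLE (w : V → V → ℝ) (T : Finset (Sym2 V)) (a b : V) (ρ : ℝ) : Prop :=
  ∀ x : V → ℝ, (x a - x b) ^ 2 ≤ ρ * energy w T x

/-- `T` is a subgraph on `X` with fewer edges than vertices in which the resistances from the
centre `x₀` are at most `4 d` (and at most `2 d` for the target `t`), and the total stretch of the
ordered pairs in `X` is at most `S`. The stretch of `u, v` is `w u v` times their resistance in
`T`; it is replaced by an upper bound `str u v`, which makes the definition free of inverses.
Since the resistances are finite, `T` is a spanning tree of `X`. -/
structure LowStretch (w : V → V → ℝ) (X : Finset V) (x₀ t : V) (d : V → ℝ)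
    (T : Finset (Sym2 V)) (S : ℝ) : Prop where
  verts : ∀ e ∈ T, ∀ a ∈ e, a ∈ X
  adj : ∀ a b, s(a, b) ∈ T → 0 < w a b
  card : T.card + 1 ≤ X.card
  target : ResLE w T x₀ t (2 * d t)
  center : ∀ v ∈ X, ResLE w T x₀ v (4 * d v)
  stretch : ∃ str : V → V → ℝ, (∀ u v, 0 ≤ str u v) ∧
    (∀ u ∈ X, ∀ v ∈ X, ∀ x, w u v * (x u - x v) ^ 2 ≤ str u v * energy w T x) ∧
    ∑ u ∈ X, ∑ v ∈ X, str u v ≤ S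

omit [Fintype V] [DecidableEq V] in
lemma energy_mono {w : V → V → ℝ} (hw : ∀ u v, 0 ≤ w u v) {T T' : Finset (Sym2 V)} (h : T ⊆ T')
    (x : V → ℝ) : energy w T x ≤ energy w T' x :=
  Finset.sum_le_sum_of_subset_of_nonneg h fun e _ _ => edgeForm_nonneg hw x e

/-- Resistances in series add: three pieces with resistances `α`, `β`, `γ` and energies `p`, `q`,
`r` (Cauchy–Schwarz). -/
lemma three_sq {a b c p q r α β γ : ℝ} (hα : 0 ≤ α) (hβ : 0 ≤ β) (hγ : 0 ≤ γ) (hp : 0 ≤ p)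
    (hq : 0 ≤ q) (hr : 0 ≤ r) (ha : a ^ 2 ≤ α * p) (hb : b ^ 2 ≤ β * q) (hc : c ^ 2 ≤ γ * r) :
    (a + b + c) ^ 2 ≤ (α + β + γ) * (p + q + r) := by
  have two : ∀ {a b p q α β : ℝ}, 0 ≤ α → 0 ≤ β → 0 ≤ p → 0 ≤ q → a ^ 2 ≤ α * p → b ^ 2 ≤ β * q →
      (a + b) ^ 2 ≤ (α + β) * (p + q) := by
    intro a b p q α β hα hβ hp hq ha hb
    have h1 : 2 * (a * b) ≤ α * q + β * p := by
      refine abs_le_of_sq_le_sq' (a := 2 * (a * b)) ?_ (by positivity) |>.2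
      have : (a * b) ^ 2 ≤ (α * p) * (β * q) := by
        rw [mul_pow]; exact mul_le_mul ha hb (sq_nonneg _) (by positivity)
      nlinarith [sq_nonneg (α * q - β * p)]
    nlinarith
  exact two (by positivity) hγ (by positivity) hr (two hα hβ hp hq ha hb) hc

omit [Fintype V] in
/-- Joining a tree on a petal `A` with centre `x₁` and a tree on the rest `B` with centre `x₀` by
an edge from `y ∈ B` to `x₁`. The resistance from `x₀` to a point of `A` is at most that to `y`,
plus that of the new edge, plus that from `x₁`. Each cut pair has both ends within resistance `4
R` of `x₀`, hence resistance at most `16 R` between them, and it occurs in both orders. -/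
lemma LowStretch.glue {w : V → V → ℝ} (hsym : ∀ u v, w u v = w v u) (hw : ∀ u v, 0 ≤ w u v)
    {A B X : Finset V} (hAB : Disjoint A B) (hX : A ∪ B = X)
    {x₁ tA : V} {dA : V → ℝ} {TA : Finset (Sym2 V)} {SA : ℝ} (GA : LowStretch w A x₁ tA dA TA SA)
    {x₀ tB : V} {dB : V → ℝ} {TB : Finset (Sym2 V)} {SB : ℝ} (GB : LowStretch w B x₀ tB dB TB SB)
    (hx₁ : x₁ ∈ A) (hdA : ∀ v ∈ A, 0 ≤ dA v) (htA : tA ∈ A)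
    (hdB : ∀ v ∈ B, 0 ≤ dB v) (htB : tB ∈ B)
    {y : V} (hy : y ∈ B) (hwy : 0 < w y x₁) {ρ : ℝ} (hρ : 0 ≤ ρ) (hyρ : ResLE w TB x₀ y ρ)
    {d : V → ℝ} (hdl : ∀ v ∈ A, ρ + (w y x₁)⁻¹ + 4 * dA v ≤ 4 * d v)
    (hdr : ∀ v ∈ B, dB v ≤ d v) {R : ℝ} (hR : ∀ v ∈ X, d v ≤ R) (hR0 : 0 ≤ R) {t : V}
    (ht : (t = tA ∧ ρ + (w y x₁)⁻¹ + 2 * dA tA ≤ 2 * d t) ∨ (t = tB ∧ dB t ≤ d t)) {c : ℝ}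
    (hcut : 16 * R * ∑ u ∈ A, ∑ v ∈ B, w u v ≤ c) :
    LowStretch w X x₀ t d (insert s(y, x₁) (TA ∪ TB)) (SA + SB + 2 * c) := by
  have hdisj : Disjoint TA TB := by
    rw [Finset.disjoint_left]
    intro e h1 h2
    induction e with
    | _ a b =>
      exact Finset.disjoint_left.1 hAB (GA.verts _ h1 a (Sym2.mem_mk_left a b))
        (GB.verts _ h2 a (Sym2.mem_mk_left a b))
  have hnew : s(y, x₁) ∉ TA ∪ TB := by
    intro hmem
    rcases Finset.mem_union.1 hmem with h1 | h1
    · exact Finset.disjoint_left.1 hAB (GA.verts _ h1 y (Sym2.mem_mk_left _ _)) hy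
    · exact Finset.disjoint_left.1 hAB hx₁ (GB.verts _ h1 x₁ (Sym2.mem_mk_right _ _))
  set T := insert s(y, x₁) (TA ∪ TB) with hT
  have hen : ∀ x, energy w T x = energy w TB x + w y x₁ * (x y - x x₁) ^ 2 + energy w TA x := by
    intro x
    rw [hT, energy, Finset.sum_insert hnew, Finset.sum_union hdisj, edgeForm_mk hsym]
    simp only [energy]; ring
  have hTA : ∀ x, energy w TA x ≤ energy w T x := energy_mono hw
    (Finset.subset_union_left.trans (Finset.subset_insert _ _))
  have hTB : ∀ x, energy w TB x ≤ energy w T x := energy_mono hw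
    (Finset.subset_union_right.trans (Finset.subset_insert _ _))
  have hAX : A ⊆ X := hX ▸ Finset.subset_union_left
  have hBX : B ⊆ X := hX ▸ Finset.subset_union_right
  have hE0 := energy_nonneg hw T
  have hcross : ∀ v (r D : ℝ), 0 ≤ r → ResLE w TA x₁ v r → ρ + (w y x₁)⁻¹ + r ≤ D →
      ResLE w T x₀ v D := by
    intro v r D hr hres hle x
    have h1 := three_sq (a := x x₀ - x y) (b := x y - x x₁) (c := x x₁ - x v) hρ
      (inv_nonneg.2 hwy.le) hr (energy_nonneg hw TB x)
      (q := w y x₁ * (x y - x x₁) ^ 2) (by positivity) (energy_nonneg hw TA x) (hyρ x)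
      (by rw [inv_mul_cancel_left₀ hwy.ne']) (hres x)
    rw [← hen] at h1
    calc (x x₀ - x v) ^ 2 = (x x₀ - x y + (x y - x x₁) + (x x₁ - x v)) ^ 2 := by ring
      _ ≤ _ := h1
      _ ≤ D * energy w T x := mul_le_mul_of_nonneg_right hle (hE0 x)
  have hB0 : ∀ v (r D : ℝ), ResLE w TB x₀ v r → 0 ≤ D → r ≤ D → ResLE w T x₀ v D := by
    intro v r D hres hD hle x
    calc (x x₀ - x v) ^ 2 ≤ r * energy w TB x := hres x
      _ ≤ D * energy w TB x := mul_le_mul_of_nonneg_right hle (energy_nonneg hw _ _)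
      _ ≤ D * energy w T x := mul_le_mul_of_nonneg_left (hTB x) hD
  have hTX : ∀ v ∈ X, ResLE w T x₀ v (4 * d v) := by
    intro v hv
    rcases Finset.mem_union.1 (hX ▸ hv) with h | h
    · exact hcross v _ _ (by linarith [hdA v h]) (GA.center v h) (hdl v h)
    · exact hB0 v _ _ (GB.center v h) (by linarith [hdB v h, hdr v h]) (by linarith [hdr v h])
  refine ⟨?_, ?_, ?_, ?_, hTX, ?_⟩
  · intro e he a ha
    rcases Finset.mem_insert.1 he with rfl | he
    · rcases Sym2.mem_iff.1 ha with rfl | rfl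
      · exact hBX hy
      · exact hAX hx₁
    · rcases Finset.mem_union.1 he with he | he
      · exact hAX (GA.verts e he a ha)
      · exact hBX (GB.verts e he a ha)
  · intro a b he
    rcases Finset.mem_insert.1 he with he | he
    · rcases Sym2.eq_iff.1 he with ⟨rfl, rfl⟩ | ⟨rfl, rfl⟩
      · exact hwy
      · rwa [hsym]
    · rcases Finset.mem_union.1 he with he | he
      · exact GA.adj a b he
      · exact GB.adj a b he
  · have h1 : X.card = A.card + B.card := by rw [← hX, Finset.card_union_of_disjoint hAB]
    rw [hT, Finset.card_insert_of_notMem hnew, Finset.card_union_of_disjoint hdisj, h1]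
    have := GA.card
    have := GB.card
    omega
  · rcases ht with ⟨rfl, h⟩ | ⟨rfl, h⟩
    · exact hcross t _ _ (by linarith [hdA t htA]) GA.target h
    · exact hB0 t _ _ GB.target (by linarith [hdB t htB]) (by linarith)
  · obtain ⟨sA, hsA0, hsA, hsAs⟩ := GA.stretch
    obtain ⟨sB, hsB0, hsB, hsBs⟩ := GB.stretch
    have hnB : ∀ u ∈ A, u ∉ B := fun u hu => Finset.disjoint_left.1 hAB hu
    have hnA : ∀ u ∈ B, u ∉ A := fun u hu => Finset.disjoint_right.1 hAB hu
    have hcr : ∀ u ∈ X, ∀ v ∈ X, ∀ x, w u v * (x u - x v) ^ 2 ≤ 16 * R * w u v * energy w T x := by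
      intro u hu v hv x
      have h1 := hTX u hu x
      have h2 := hTX v hv x
      have h3 := mul_le_mul_of_nonneg_right (hR u hu) (hE0 x)
      have h4 := mul_le_mul_of_nonneg_right (hR v hv) (hE0 x)
      have h5 : (x u - x v) ^ 2 ≤ 16 * R * energy w T x := by
        nlinarith [sq_nonneg (x x₀ - x u + (x x₀ - x v))]
      nlinarith [mul_le_mul_of_nonneg_left h5 (hw u v)]
    refine ⟨fun u v => if u ∈ A ∧ v ∈ A then sA u v else if u ∈ B ∧ v ∈ B then sB u v
      else 16 * R * w u v, ?_, ?_, ?_⟩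
    · intro u v
      dsimp only
      split_ifs
      · exact hsA0 u v
      · exact hsB0 u v
      · exact mul_nonneg (by positivity) (hw u v)
    · intro u hu v hv x
      dsimp only
      split_ifs with h1 h2
      · exact (hsA u h1.1 v h1.2 x).trans (mul_le_mul_of_nonneg_left (hTA x) (hsA0 u v))
      · exact (hsB u h2.1 v h2.2 x).trans (mul_le_mul_of_nonneg_left (hTB x) (hsB0 u v))
      · exact hcr u hu v hv x
    · rw [← hX, Finset.sum_union hAB]
      simp only [Finset.sum_union hAB, Finset.sum_add_distrib]
      have e1 : ∑ u ∈ A, ∑ v ∈ A, (if u ∈ A ∧ v ∈ A then sA u v else if u ∈ B ∧ v ∈ B then sB u v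
          else 16 * R * w u v) = ∑ u ∈ A, ∑ v ∈ A, sA u v :=
        Finset.sum_congr rfl fun u hu => Finset.sum_congr rfl fun v hv => by simp [hu, hv]
      have e2 : ∑ u ∈ B, ∑ v ∈ B, (if u ∈ A ∧ v ∈ A then sA u v else if u ∈ B ∧ v ∈ B then sB u v
          else 16 * R * w u v) = ∑ u ∈ B, ∑ v ∈ B, sB u v :=
        Finset.sum_congr rfl fun u hu => Finset.sum_congr rfl fun v hv => by
          simp [hu, hv, hnA u hu]
      have e3 : ∑ u ∈ A, ∑ v ∈ B, (if u ∈ A ∧ v ∈ A then sA u v else if u ∈ B ∧ v ∈ B then sB u v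
          else 16 * R * w u v) = 16 * R * ∑ u ∈ A, ∑ v ∈ B, w u v := by
        simp only [Finset.mul_sum]
        exact Finset.sum_congr rfl fun u hu => Finset.sum_congr rfl fun v hv => by
          simp [hnA v hv, hnB u hu]
      have e4 : ∑ u ∈ B, ∑ v ∈ A, (if u ∈ A ∧ v ∈ A then sA u v else if u ∈ B ∧ v ∈ B then sB u v
          else 16 * R * w u v) = 16 * R * ∑ u ∈ A, ∑ v ∈ B, w u v := by
        rw [Finset.sum_comm]
        simp only [Finset.mul_sum]
        exact Finset.sum_congr rfl fun u hu => Finset.sum_congr rfl fun v hv => by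
          simp [hnA v hv, hnB u hu, hsym u v]
      rw [e1, e2, e3, e4]
      linarith

end LowStretch

/-! ### The petal decomposition -/

section LowStretch
variable {V : Type*} [Fintype V] [DecidableEq V]

/-- The situation the recursion for low-stretch trees runs on: the shortest-path distance `d`
from `x₀` in `X`, for edge lengths `ℓ` that are the resistances `1 / w`, except that those along
the shortest path `P` from `x₀` to the target `t` may have been shortened, by at most one half. -/
structure Stage (w ℓ : V → V → ℝ) (X : Finset V) (x₀ t : V) (P : Finset V) (d : V → ℝ) :
    Prop where
  lsym : ∀ u v, ℓ u v = ℓ v u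
  lower : ∀ u ∈ X, ∀ v ∈ X, 0 < w u v → (w u v)⁻¹ / 2 ≤ ℓ u v
  upper : ∀ u ∈ X, ∀ v ∈ X, 0 < w u v → ℓ u v ≤ (w u v)⁻¹
  off : ∀ u ∈ X, ∀ v ∈ X, 0 < w u v → ¬ (u ∈ P ∧ v ∈ P) → ℓ u v = (w u v)⁻¹
  dist : IsDist w ℓ X x₀ d
  sub : P ⊆ X
  path : IsPath w ℓ P x₀ t d

omit [Fintype V] [DecidableEq V] in
lemma Stage.pos {w ℓ : V → V → ℝ} {X : Finset V} {x₀ t : V} {P : Finset V} {d : V → ℝ}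
    (hS : Stage w ℓ X x₀ t P d) : ∀ u ∈ X, ∀ v ∈ X, 0 < w u v → 0 < ℓ u v := fun u hu v hv hw => by
  have := hS.lower u hu v hv hw
  have := inv_pos.2 hw
  linarith

/-- The recursive cost `N log₂ N` pays for a cut charged to a side with `a` pairs out of
`N = a + b + 2 c`, when `2 a ≤ N`: the logarithm drops by one on that side. -/
lemma cost_combine {a b c : ℕ} (h : 2 * a ≤ a + b + 2 * c) :
    a * Nat.log 2 a + b * Nat.log 2 b + (a + c) ≤
      (a + b + 2 * c) * Nat.log 2 (a + b + 2 * c) := by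
  set N := a + b + 2 * c with hN
  have hb : Nat.log 2 b ≤ Nat.log 2 N := Nat.log_mono_right (by omega)
  rcases Nat.lt_or_ge N 2 with h2 | h2
  · have ha : a = 0 := by omega
    have hc : c = 0 := by omega
    subst ha hc
    simp [hN]
  · have hL : 1 ≤ Nat.log 2 N := Nat.log_pos (by norm_num) h2
    have ha : Nat.log 2 a ≤ Nat.log 2 N - 1 := by
      rw [← Nat.log_div_base]
      exact Nat.log_mono_right (by omega)
    obtain ⟨l, hl⟩ : ∃ l, Nat.log 2 N = l + 1 := ⟨_, (Nat.sub_add_cancel hL).symm⟩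
    rw [hl] at ha hb ⊢
    have h3 : a * Nat.log 2 a ≤ a * l := Nat.mul_le_mul_left _ (by simpa using ha)
    have h4 : b * Nat.log 2 b ≤ b * (l + 1) := Nat.mul_le_mul_left _ hb
    have : (a + b + 2 * c) * (l + 1) = a * l + b * (l + 1) + a + 2 * (c * l) + 2 * c := by ring
    rw [hN, this]
    have := Nat.zero_le (c * l)
    omega

omit [Fintype V] in
lemma cost_split {w : V → V → ℝ} (hsym : ∀ u v, w u v = w v u) {A B X : Finset V}
    (hAB : Disjoint A B) (hX : A ∪ B = X) (k : ℕ) {Q : ℝ}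
    (hQ : (2 * numPairs w A A ≤ numPairs w X X ∧
        Q ≤ 1024 * k * (numPairs w A A + numPairs w A B)) ∨
       (2 * numPairs w B B ≤ numPairs w X X ∧
        Q ≤ 1024 * k * (numPairs w B B + numPairs w A B))) :
    2048 * k * (numPairs w A A * Nat.log 2 (numPairs w A A) : ℕ) +
      2048 * k * (numPairs w B B * Nat.log 2 (numPairs w B B) : ℕ) + 2 * Q ≤
      2048 * k * (numPairs w X X * Nat.log 2 (numPairs w X X) : ℕ) := by
  have hN := numPairs_split hsym hAB
  rw [hX] at hN
  have hk : (0 : ℝ) ≤ 2048 * k := by positivity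
  rcases hQ with ⟨h1, h2⟩ | ⟨h1, h2⟩
  · rw [hN] at h1
    have := cost_combine h1
    rw [← hN] at this
    have h3 : ((_ : ℕ) : ℝ) ≤ ((_ : ℕ) : ℝ) := Nat.cast_le.2 this
    rw [Nat.cast_add, Nat.cast_add] at h3
    have h4 := mul_le_mul_of_nonneg_left h3 hk
    push_cast at h4 ⊢
    linarith
  · have e : numPairs w B B + numPairs w A A + 2 * numPairs w A B = numPairs w X X := by omega
    rw [← e] at h1
    have := cost_combine h1
    rw [e] at this
    have h3 : ((_ : ℕ) : ℝ) ≤ ((_ : ℕ) : ℝ) := Nat.cast_le.2 this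
    rw [Nat.cast_add, Nat.cast_add] at h3
    have h4 := mul_le_mul_of_nonneg_left h3 hk
    push_cast at h4 ⊢
    linarith

omit [Fintype V] [DecidableEq V] in
lemma LowStretch.mono {w : V → V → ℝ} {X : Finset V} {x₀ t : V} {d : V → ℝ}
    {T : Finset (Sym2 V)} {S S' : ℝ} (h : LowStretch w X x₀ t d T S) (hS : S ≤ S') :
    LowStretch w X x₀ t d T S' := by
  obtain ⟨str, h0, h1, h2⟩ := h.stretch
  exact ⟨h.verts, h.adj, h.card, h.target, h.center, str, h0, h1, h2.trans hS⟩

omit [Fintype V] [DecidableEq V] in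
lemma Stage.restrict {w ℓ : V → V → ℝ} {X Y : Finset V} {x₀ t x₁ t₁ : V} {P P₁ : Finset V}
    {d d₁ : V → ℝ} (hS : Stage w ℓ X x₀ t P d) (hY : Y ⊆ X) (hd : IsDist w ℓ Y x₁ d₁)
    (hP₁ : P₁ ⊆ Y) (hPP : ∀ p ∈ P, p ∈ Y → p ∈ P₁) (hp : IsPath w ℓ P₁ x₁ t₁ d₁) :
    Stage w ℓ Y x₁ t₁ P₁ d₁ :=
  ⟨hS.lsym, fun u hu v hv => hS.lower u (hY hu) v (hY hv),
    fun u hu v hv => hS.upper u (hY hu) v (hY hv),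
    fun u hu v hv hw hn => hS.off u (hY hu) v (hY hv) hw
      fun h => hn ⟨hPP u h.1 hu, hPP v h.2 hv⟩, hd, hP₁, hp⟩

/-- The petal decomposition. If the target `t` of the current path is at least half as far as the
farthest vertex `z`, the petal is cut along the current path, with no further halving: its lengths
have possibly been halved already, and the target resistance `2 d` of the pieces along the path
takes the place of `4 d`. Otherwise the petal is cut along a shortest path to `z`, whose lengths
are halved inside the petal; all of the current path stays in the complement. The parameter `n`
bounds the number of vertices and carries the induction. -/
lemma exists_lowStretch {w : V → V → ℝ} (hsym : ∀ u v, w u v = w v u) (hw : ∀ u v, 0 ≤ w u v)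
    (hirr : ∀ u, w u u = 0) (k : ℕ) : ∀ (n : ℕ) (ℓ : V → V → ℝ) (X : Finset V) (x₀ t : V)
    (P : Finset V) (d : V → ℝ), X.card ≤ n → numPairs w X X < 2 ^ k → Stage w ℓ X x₀ t P d →
    ∃ T, LowStretch w X x₀ t d T
      (2048 * k * (numPairs w X X * Nat.log 2 (numPairs w X X) : ℕ)) := by
  intro n
  induction n with
  | zero =>
    intro ℓ X x₀ t P d hn _ hS
    have := Finset.card_pos.2 ⟨x₀, hS.dist.mem⟩
    omega
  | succ n ih =>
    intro ℓ X x₀ t P d hn hk hS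
    have hd0 := hS.dist.nonneg hS.pos
    have htX := hS.sub hS.path.mem_target
    obtain ⟨z, hz, hmax⟩ := X.exists_max_image d ⟨x₀, hS.dist.mem⟩
    by_cases hzx : z = x₀
    · -- every distance vanishes, so `X` is a single vertex
      have hall : ∀ v ∈ X, v = x₀ := by
        intro v hv
        by_contra hne
        have h1 := hS.dist.pos hS.pos hv hne
        have h2 := hmax v hv
        rw [hzx, hS.dist.zero] at h2
        linarith
      refine ⟨∅, by simp, by simp, by simpa using ⟨x₀, hS.dist.mem⟩, ?_, ?_, fun _ _ => 0,
        by simp, ?_, by simp; positivity⟩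
      · intro x; simp [energy, hall t htX]
      · intro v hv x; simp [energy, hall v hv]
      · intro u hu v hv x; simp [hall u hu, hall v hv]
    have hR : 0 < d z := hS.dist.pos hS.pos hz hzx
    by_cases hcase : d z / 2 ≤ d t
    · -- the target is far away: cut along the path to the target
      obtain ⟨h, D⟩ := PetalData.exists_of_path hsym hS.lsym hirr hS.pos hS.dist hS.sub hS.path
      obtain ⟨s, hs1, hs2, A, B, hA, hB, hcut⟩ := D.exists_level hw hS.upper hk hR hcase
      have hs : 0 < s := by linarith
      obtain ⟨y, hy, x₁, hx₁, hwy, hdx, hys, hxs, hmin, hymax⟩ := D.exists_gate hs hs2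
      obtain ⟨d₁, hd₁, hd₁le, hd₁P⟩ := D.exists_dist_petal hirr hx₁ hxs hmin hs
      have hpA := D.path_petal hx₁ hxs hmin hs hs2 one_pos (ℓ' := ℓ) (d' := d₁) (by simp)
        (by simpa using hd₁P)
      have hpB := D.path_rest hs hy hys hymax
      have hdB := D.dist_rest hs
      rw [← hA] at hd₁
      rw [← hB] at hdB
      have hmA : ∀ v, v ∈ A ↔ v ∈ X ∧ s ≤ d v - h v := by simp [hA]
      have hmB : ∀ v, v ∈ B ↔ v ∈ X ∧ d v - h v < s := by simp [hB]
      have hdis : Disjoint A B := Finset.disjoint_left.2 fun v h1 h2 => by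
        linarith [((hmA v).1 h1).2, ((hmB v).1 h2).2]
      have hun : A ∪ B = X := by
        ext v
        rw [Finset.mem_union, hmA, hmB]
        have := le_or_gt s (d v - h v)
        tauto
      have hcard : A.card + B.card = X.card := by
        rw [← hun, Finset.card_union_of_disjoint hdis]
      have hA1 := Finset.card_pos.2 ⟨x₁, hd₁.mem⟩
      have hB1 := Finset.card_pos.2 ⟨x₀, hdB.mem⟩
      have hAX : A ⊆ X := hun ▸ Finset.subset_union_left
      have hBX : B ⊆ X := hun ▸ Finset.subset_union_right
      have hPhalf := D.eq_half
      have SA : Stage w ℓ A x₁ t (P.filter fun p => 2 * s ≤ d p) d₁ := by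
        refine hS.restrict hAX hd₁ (fun p hp => ?_) (fun p hp hpA => ?_) hpA
        · obtain ⟨hp, hps⟩ := Finset.mem_filter.1 hp
          exact (hmA p).2 ⟨hS.sub hp, by linarith [hPhalf p hp]⟩
        · exact Finset.mem_filter.2 ⟨hp, by linarith [hPhalf p hp, ((hmA p).1 hpA).2]⟩
      have SB : Stage w ℓ B x₀ y (P.filter fun p => d p < 2 * s) d := by
        refine hS.restrict hBX hdB (fun p hp => ?_) (fun p hp hpA => ?_) hpB
        · obtain ⟨hp, hps⟩ := Finset.mem_filter.1 hp
          exact (hmB p).2 ⟨hS.sub hp, by linarith [hPhalf p hp]⟩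
        · exact Finset.mem_filter.2 ⟨hp, by linarith [hPhalf p hp, ((hmB p).1 hpA).2]⟩
      obtain ⟨TA, GA⟩ := ih ℓ A x₁ t _ d₁ (by omega)
        ((numPairs_mono w hAX hAX).trans_lt hk) SA
      obtain ⟨TB, GB⟩ := ih ℓ B x₀ y _ d (by omega)
        ((numPairs_mono w hBX hBX).trans_lt hk) SB
      have hinv := hS.lower y (hS.sub hy) x₁ (hS.sub hx₁) hwy
      have htA : t ∈ A := SA.sub SA.path.mem_target
      have hyB : y ∈ B := SB.sub SB.path.mem_target
      refine ⟨_, (LowStretch.glue hsym hw hdis hun GA GB hd₁.mem (hd₁.nonneg SA.pos) htA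
        (hdB.nonneg SB.pos) hyB hyB hwy (ρ := 2 * d y) (by linarith [hd0 y (hS.sub hy)]) GB.target
        (d := d) ?_ (fun v _ => le_rfl) (R := d z) hmax hR.le (t := t) (Or.inl ⟨rfl, ?_⟩)
        le_rfl).mono (cost_split hsym hdis hun k hcut)⟩
      · intro v hv
        obtain ⟨hv, hvs⟩ := (hmA v).1 hv
        linarith [hd₁le v hv hvs]
      · have := hd₁P t hS.path.mem_target (by linarith)
        linarith
    · -- the target is close: cut along a path to a farthest vertex
      push Not at hcase
      obtain ⟨P', hP'X, hP'⟩ := hS.dist.exists_isPath hS.pos z hz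
      obtain ⟨h, D⟩ := PetalData.exists_of_path hsym hS.lsym hirr hS.pos hS.dist hP'X hP'
      obtain ⟨s, hs1, hs2, A, B, hA, hB, hcut⟩ := D.exists_level hw hS.upper hk hR (by linarith)
      have hs : 0 < s := by linarith
      obtain ⟨y, hy, x₁, hx₁, hwy, hdx, hys, hxs, hmin, hymax⟩ := D.exists_gate hs hs2
      have hPhalf := D.eq_half
      have hd₁ := D.dist_petal hx₁ hxs hmin hs
      have hpA := D.path_petal hx₁ hxs hmin hs hs2 (c := 1 / 2) (by norm_num)
        (ℓ' := halve P' ℓ) (d' := fun v => h v - h x₁)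
        (fun u hu v hv => by rw [halve_of_mem hu hv]; ring)
        (fun p hp _ => by rw [hPhalf p hp, hPhalf x₁ hx₁]; ring)
      have hdB := D.dist_rest hs
      rw [← hA] at hd₁
      rw [← hB] at hdB
      have hmA : ∀ v, v ∈ A ↔ v ∈ X ∧ s ≤ d v - h v := by simp [hA]
      have hmB : ∀ v, v ∈ B ↔ v ∈ X ∧ d v - h v < s := by simp [hB]
      have hdis : Disjoint A B := Finset.disjoint_left.2 fun v h1 h2 => by
        linarith [((hmA v).1 h1).2, ((hmB v).1 h2).2]
      have hun : A ∪ B = X := by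
        ext v
        rw [Finset.mem_union, hmA, hmB]
        have := le_or_gt s (d v - h v)
        tauto
      have hcard : A.card + B.card = X.card := by
        rw [← hun, Finset.card_union_of_disjoint hdis]
      have hA1 := Finset.card_pos.2 ⟨x₁, hd₁.mem⟩
      have hB1 := Finset.card_pos.2 ⟨x₀, hdB.mem⟩
      have hAX : A ⊆ X := hun ▸ Finset.subset_union_left
      have hBX : B ⊆ X := hun ▸ Finset.subset_union_right
      -- points of the petal are farther away than the whole old path
      have hfar : ∀ v ∈ A, 2 * s ≤ d v := fun v hv => by
        obtain ⟨hv, hvs⟩ := (hmA v).1 hv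
        linarith [D.half_le v hv]
      have hPA : ∀ p ∈ P, p ∉ A := fun p hp hpA => by
        linarith [hfar p hpA, hS.path.le_target p hp]
      have hPB : P ⊆ B := fun p hp => by
        rcases Finset.mem_union.1 (hun ▸ hS.sub hp : p ∈ A ∪ B) with h1 | h1
        · exact absurd h1 (hPA p hp)
        · exact h1
      have SA : Stage w (halve P' ℓ) A x₁ z (P'.filter fun p => 2 * s ≤ d p)
          (fun v => h v - h x₁) := by
        have hoff : ∀ u ∈ A, ∀ v ∈ A, 0 < w u v → ℓ u v = (w u v)⁻¹ := fun u hu v hv hw =>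
          hS.off u (hAX hu) v (hAX hv) hw fun hc => hPA u hc.1 hu
        have hb : ∀ u ∈ A, ∀ v ∈ A, 0 < w u v → _ := fun u hu v hv hw =>
          halve_bounds (P := P') (hS.pos u (hAX hu) v (hAX hv) hw)
        refine ⟨fun u v => ?_, fun u hu v hv hw => ?_, fun u hu v hv hw => ?_,
          fun u hu v hv hw hn => ?_, hd₁, fun p hp => ?_, hpA⟩
        · simp only [halve, hS.lsym u v, and_comm]
        · rw [← hoff u hu v hv hw]; exact (hb u hu v hv hw).1
        · rw [← hoff u hu v hv hw]; exact (hb u hu v hv hw).2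
        · rw [← hoff u hu v hv hw]
          exact halve_of_not_mem fun hc => hn ⟨Finset.mem_filter.2 ⟨hc.1, hfar u hu⟩,
            Finset.mem_filter.2 ⟨hc.2, hfar v hv⟩⟩
        · obtain ⟨hp, hps⟩ := Finset.mem_filter.1 hp
          exact (hmA p).2 ⟨hP'X hp, by linarith [hPhalf p hp]⟩
      have SB : Stage w ℓ B x₀ t P d :=
        hS.restrict hBX hdB hPB (fun p hp _ => hp) hS.path
      obtain ⟨TA, GA⟩ := ih _ A x₁ z _ _ (by omega)
        ((numPairs_mono w hAX hAX).trans_lt hk) SA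
      obtain ⟨TB, GB⟩ := ih ℓ B x₀ t _ d (by omega)
        ((numPairs_mono w hBX hBX).trans_lt hk) SB
      have hinv := hS.lower y (hP'X hy) x₁ (hP'X hx₁) hwy
      have hzA : z ∈ A := SA.sub SA.path.mem_target
      have htB : t ∈ B := hPB hS.path.mem_target
      have hyB : y ∈ B := (hmB y).2 ⟨hP'X hy, by linarith [hPhalf y hy]⟩
      refine ⟨_, (LowStretch.glue hsym hw hdis hun GA GB hd₁.mem (hd₁.nonneg SA.pos) hzA
        (hdB.nonneg SB.pos) htB hyB hwy (ρ := 4 * d y) (by linarith [hd0 y (hP'X hy)])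
        (GB.center y hyB) (d := d) ?_ (fun v _ => le_rfl) (R := d z) hmax hR.le (t := t)
        (Or.inr ⟨rfl, le_rfl⟩) le_rfl).mono (cost_split hsym hdis hun k hcut)⟩
      intro v hv
      obtain ⟨hv, hvs⟩ := (hmA v).1 hv
      linarith [hPhalf x₁ hx₁]

end LowStretch

/-! ### Low-stretch spanning trees -/

section LowStretch
variable {V : Type*} [Fintype V] [DecidableEq V]

/-- Every connected weighted graph has a connected spanning subgraph with fewer edges than
vertices (hence a spanning tree) of total stretch `O(m (log m) ^ 2)`. Connectivity is expressed
by saying that a vector of zero energy is constant. -/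
lemma exists_lowStretch_tree {w : V → V → ℝ} (hsym : ∀ u v, w u v = w v u)
    (hw : ∀ u v, 0 ≤ w u v) (hirr : ∀ u, w u u = 0) {G : SimpleGraph V}
    (hG : ∀ u v, G.Adj u v ↔ 0 < w u v) (hconn : G.Connected) {N : ℕ}
    (hN : numPairs w Finset.univ Finset.univ = N) :
    ∃ T : Finset (Sym2 V), (∀ a b, s(a, b) ∈ T → 0 < w a b) ∧ T.card + 1 ≤ Fintype.card V ∧
      (∀ x, energy w T x = 0 → ∀ u v, x u = x v) ∧
      ∃ str : V → V → ℝ, (∀ u v, 0 ≤ str u v) ∧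
        (∀ u v x, w u v * (x u - x v) ^ 2 ≤ str u v * energy w T x) ∧
        ∑ u, ∑ v, str u v ≤ 2048 * (Nat.log 2 N + 1 : ℕ) * (N * Nat.log 2 N : ℕ) := by
  obtain ⟨x₀⟩ := hconn.nonempty
  set ℓ : V → V → ℝ := fun u v => (w u v)⁻¹ with hℓ
  set M : ℝ := ∑ u, ∑ v, ℓ u v with hM
  have hℓ0 : ∀ u v, 0 ≤ ℓ u v := fun u v => inv_nonneg.2 (hw u v)
  have hle : ∀ u v, ℓ u v ≤ M := fun u v =>
    (Finset.single_le_sum (f := fun v => ℓ u v) (fun v _ => hℓ0 u v) (Finset.mem_univ v)).trans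
      (Finset.single_le_sum (f := fun u => ∑ v, ℓ u v)
        (fun u _ => Finset.sum_nonneg fun v _ => hℓ0 u v) (Finset.mem_univ u))
  obtain ⟨d, hd, -⟩ := exists_isDist (w := w) (ℓ := ℓ) (X := Finset.univ) (x₀ := x₀)
    (g := fun v => G.dist v x₀ * M) (fun u _ v _ h => inv_pos.2 h) (Finset.mem_univ _)
    (by simp) (fun v _ hne => by
      obtain ⟨p, hp⟩ := hconn.exists_walk_length_eq_dist v x₀
      cases p with
      | nil => exact absurd rfl hne
      | @cons _ u _ hadj q =>
        refine ⟨u, Finset.mem_univ _, by rw [hsym]; exact (hG _ _).1 hadj, ?_⟩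
        have h1 : G.dist u x₀ + 1 ≤ G.dist v x₀ := by
          rw [← hp, SimpleGraph.Walk.length_cons]
          exact Nat.succ_le_succ (SimpleGraph.dist_le q)
        have h2 : (G.dist u x₀ : ℝ) + 1 ≤ G.dist v x₀ := by exact_mod_cast h1
        have h3 : 0 ≤ M := (hℓ0 u v).trans (hle u v)
        nlinarith [hle u v]) hirr
  have hS : Stage w ℓ Finset.univ x₀ x₀ {x₀} d :=
    ⟨fun u v => by simp only [hℓ, hsym u v], fun u _ v _ _ => by linarith [hℓ0 u v],
      fun _ _ _ _ _ => le_rfl, fun _ _ _ _ _ _ => rfl, hd, by simp,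
      by simp, by simp, by simp, by simp, fun p hp hne => absurd (by simpa using hp) hne⟩
  obtain ⟨T, hT⟩ := exists_lowStretch hsym hw hirr (Nat.log 2 N + 1) _ ℓ Finset.univ x₀ x₀ {x₀} d
    le_rfl (by rw [hN]; exact Nat.lt_pow_succ_log_self (by norm_num) _) hS
  rw [hN] at hT
  refine ⟨T, hT.adj, hT.card, ?_, ?_⟩
  · intro x hx
    have h : ∀ v, x v = x x₀ := fun v => by
      have := hT.center v (Finset.mem_univ v) x
      rw [hx, mul_zero] at this
      have h2 := pow_eq_zero_iff (two_ne_zero) |>.1 (le_antisymm this (sq_nonneg _))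
      linarith
    intro u v; rw [h u, h v]
  · obtain ⟨str, h0, h1, h2⟩ := hT.stretch
    exact ⟨str, h0, fun u v x => h1 u (Finset.mem_univ u) v (Finset.mem_univ v) x, h2⟩

end LowStretch

/-! ### The barrier argument -/

section Barrier
variable {E : Type*} [AddCommGroup E] [Module ℝ E] {ι : Type*}

/-- The rank-one bilinear form `(x, y) ↦ φ x * φ y`. -/
def rankOne (φ : E →ₗ[ℝ] ℝ) : E →ₗ[ℝ] E →ₗ[ℝ] ℝ := φ.smulRight φ

lemma rankOne_apply (φ : E →ₗ[ℝ] ℝ) (x y : E) : rankOne φ x y = φ x * φ y := rfl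

/-- `B` is an inner product for which the sum of the squared dual norms of the functionals
`φ e`, `e ∈ R`, is at most `s`; equivalently, the trace of `B⁻¹ ∑ e ∈ R, φ e ⊗ φ e` is at most
`s`. The dual norms are replaced by upper bounds `τ e`, so that no inverse is needed. -/
structure Potential (φ : ι → E →ₗ[ℝ] ℝ) (R : Finset ι) (s : ℝ) (B : E →ₗ[ℝ] E →ₗ[ℝ] ℝ) :
    Prop where
  symm : ∀ x y, B x y = B y x
  pos : ∀ x, x ≠ 0 → 0 < B x x
  bound : ∃ τ : ι → ℝ, (∀ e ∈ R, 0 ≤ τ e) ∧ (∀ e ∈ R, ∀ x, φ e x ^ 2 ≤ τ e * B x x) ∧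
    ∑ e ∈ R, τ e ≤ s

lemma exists_riesz [FiniteDimensional ℝ E] {B : E →ₗ[ℝ] E →ₗ[ℝ] ℝ}
    (hpos : ∀ x, x ≠ 0 → 0 < B x x) (φ : E →ₗ[ℝ] ℝ) : ∃ y, ∀ x, B y x = φ x := by
  have hinj : Function.Injective B := by
    rw [injective_iff_map_eq_zero]
    intro x hx
    by_contra hne
    have := hpos x hne
    simp [hx] at this
  obtain ⟨y, hy⟩ := (LinearMap.linearEquivOfInjective (f := B) hinj
    Subspace.dual_finrank_eq.symm).surjective φ
  exact ⟨y, fun x => by rw [← hy]; rfl⟩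

/-- One step of the barrier argument: lowering the barrier by `η` raises the potential by at most
`η Ψ`, where `Ψ` sums the squared pairings of the functionals under the new inner product, and by
averaging some `e ∈ R` brings the potential down by at least as much (Sherman–Morrison) when it is
added with weight `γ`. -/
lemma Potential.step [FiniteDimensional ℝ E] [DecidableEq ι] {φ : ι → E →ₗ[ℝ] ℝ} {R : Finset ι}
    (hR : R.Nonempty)
    {s : ℝ} {B : E →ₗ[ℝ] E →ₗ[ℝ] ℝ} (h : Potential φ R s B) {η γ : ℝ} (hη : 0 < η) (hγ : 0 < γ)
    (hηγ : η * (R.card + γ * (2 * s)) ≤ γ) :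
    ∃ e ∈ R, Potential φ (R.erase e) s
      (B - η • ∑ f ∈ R, rankOne (φ f) + γ • rankOne (φ e)) := by
  obtain ⟨τ, hτ0, hτ, hτs⟩ := h.bound
  have hB0 : ∀ x, 0 ≤ B x x := fun x => by
    by_cases hx : x = 0
    · simp [hx]
    · exact (h.pos x hx).le
  set r : E → ℝ := fun x => ∑ f ∈ R, φ f x ^ 2 with hr
  have hr0 : ∀ x, 0 ≤ r x := fun x => Finset.sum_nonneg fun f _ => sq_nonneg _
  have hrs : ∀ x, r x ≤ s * B x x := fun x => by
    calc r x ≤ ∑ f ∈ R, τ f * B x x := Finset.sum_le_sum fun f hf => hτ f hf x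
      _ = (∑ f ∈ R, τ f) * B x x := by rw [Finset.sum_mul]
      _ ≤ _ := mul_le_mul_of_nonneg_right hτs (hB0 x)
  have hηs : η * (2 * s) ≤ 1 := by
    have : (0 : ℝ) ≤ η * R.card := by positivity
    by_contra! hc
    nlinarith
  set B' : E →ₗ[ℝ] E →ₗ[ℝ] ℝ := B - η • ∑ f ∈ R, rankOne (φ f) with hB'
  have hB'a : ∀ x y, B' x y = B x y - η * ∑ f ∈ R, φ f x * φ f y := fun x y => by
    simp [hB', LinearMap.sum_apply, rankOne_apply]
  have hB'x : ∀ x, B' x x = B x x - η * r x := fun x => by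
    rw [hB'a, hr]; simp only [sq]
  have hhalf : ∀ x, B x x ≤ 2 * B' x x := fun x => by
    have h1 := mul_le_mul_of_nonneg_left (hrs x) hη.le
    have h2 := mul_le_mul_of_nonneg_right hηs (hB0 x)
    rw [hB'x]; linarith
  have hpos' : ∀ x, x ≠ 0 → 0 < B' x x := fun x hx => by linarith [h.pos x hx, hhalf x]
  have hB'0 : ∀ x, 0 ≤ B' x x := fun x => by linarith [hB0 x, hhalf x]
  have hsym' : ∀ x y, B' x y = B' y x := fun x y => by
    rw [hB'a, hB'a, h.symm]; simp only [mul_comm]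
  choose y hy using fun e => exists_riesz hpos' (φ e)
  have hb : ∀ e, B' (y e) (y e) = φ e (y e) := fun e => hy e _
  have hb0 : ∀ e, 0 ≤ φ e (y e) := fun e => hb e ▸ hB'0 _
  -- the old dual norms are bounded below by the variational principle
  have hτ1 : ∀ e ∈ R, φ e (y e) ≤ τ e + η * r (y e) := by
    intro e he
    have h1 := hτ e he (y e)
    have h2 : B (y e) (y e) = φ e (y e) + η * r (y e) := by rw [← hb, hB'x]; ring
    rw [h2] at h1
    have h3 := hb0 e
    have h4 := mul_nonneg hη.le (hr0 (y e))
    by_contra! hc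
    have := hτ0 e he
    nlinarith
  have hτ2 : ∀ e ∈ R, φ e (y e) ≤ 2 * τ e := by
    intro e he
    have h1 := hτ e he (y e)
    have h2 := hhalf (y e)
    rw [hb] at h2
    have h3 := hτ0 e he
    have h4 := hb0 e
    by_contra! hc
    nlinarith [mul_le_mul_of_nonneg_left h2 h3]
  set Ψ : ℝ := ∑ e ∈ R, r (y e) with hΨ
  have hΨ0 : 0 ≤ Ψ := Finset.sum_nonneg fun e _ => hr0 _
  have hsumb : ∑ e ∈ R, φ e (y e) ≤ s + η * Ψ := by
    calc ∑ e ∈ R, φ e (y e) ≤ ∑ e ∈ R, (τ e + η * r (y e)) := Finset.sum_le_sum hτ1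
      _ = ∑ e ∈ R, τ e + η * Ψ := by rw [Finset.sum_add_distrib, Finset.mul_sum]
      _ ≤ _ := by linarith
  have hsumb2 : ∑ e ∈ R, φ e (y e) ≤ 2 * s := by
    calc ∑ e ∈ R, φ e (y e) ≤ ∑ e ∈ R, 2 * τ e := Finset.sum_le_sum hτ2
      _ = 2 * ∑ e ∈ R, τ e := by rw [Finset.mul_sum]
      _ ≤ _ := by linarith
  obtain ⟨e, he, hge⟩ : ∃ e ∈ R, η * Ψ * (1 + γ * φ e (y e)) ≤ γ * r (y e) := by
    refine Finset.exists_le_of_sum_le hR ?_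
    rw [← Finset.mul_sum, ← Finset.mul_sum, Finset.sum_add_distrib, ← Finset.mul_sum]
    simp only [Finset.sum_const, nsmul_eq_mul, mul_one]
    have h1 : (R.card : ℝ) + γ * ∑ e ∈ R, φ e (y e) ≤ R.card + γ * (2 * s) := by
      have := mul_le_mul_of_nonneg_left hsumb2 hγ.le
      linarith
    calc η * Ψ * (R.card + γ * ∑ e ∈ R, φ e (y e)) ≤ η * Ψ * (R.card + γ * (2 * s)) :=
          mul_le_mul_of_nonneg_left h1 (by positivity)
      _ = Ψ * (η * (R.card + γ * (2 * s))) := by ring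
      _ ≤ Ψ * γ := mul_le_mul_of_nonneg_left hηγ hΨ0
      _ = γ * Ψ := mul_comm _ _
  have hden : 0 < 1 + γ * φ e (y e) := by
    have := mul_nonneg hγ.le (hb0 e)
    linarith
  set B'' : E →ₗ[ℝ] E →ₗ[ℝ] ℝ := B' + γ • rankOne (φ e) with hB''
  have hB''a : ∀ x z, B'' x z = B' x z + γ * (φ e x * φ e z) := fun x z => by
    simp [hB'', rankOne_apply]
  have hsym'' : ∀ x z, B'' x z = B'' z x := fun x z => by
    rw [hB''a, hB''a, hsym', mul_comm (φ e x)]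
  have hle'' : ∀ x, B' x x ≤ B'' x x := fun x => by
    rw [hB''a]
    have := mul_nonneg hγ.le (mul_self_nonneg (φ e x))
    linarith
  have hB''0 : ∀ x, 0 ≤ B'' x x := fun x => (hB'0 x).trans (hle'' x)
  refine ⟨e, he, hsym'', fun x hx => (hpos' x hx).trans_le (hle'' x),
    fun f => φ f (y f) - γ * φ f (y e) ^ 2 / (1 + γ * φ e (y e)), ?_⟩
  -- the Riesz representatives for the updated inner product, by Sherman–Morrison
  set z : ι → E := fun f => y f - (γ * φ f (y e) / (1 + γ * φ e (y e))) • y e with hz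
  have hcomm : ∀ f, φ e (y f) = φ f (y e) := fun f => by rw [← hy e, ← hy f, hsym']
  have hrep : ∀ f x, B'' (z f) x = φ f x := by
    intro f x
    rw [hB''a, hz]
    simp only [map_sub, map_smul, LinearMap.sub_apply, LinearMap.smul_apply, smul_eq_mul, hy,
      hcomm f]
    field_simp
    ring
  have hval : ∀ f, B'' (z f) (z f) = φ f (y f) - γ * φ f (y e) ^ 2 / (1 + γ * φ e (y e)) := by
    intro f
    rw [hrep, hz]
    simp only [map_sub, map_smul, smul_eq_mul]
    ring
  have hnn : ∀ f, 0 ≤ φ f (y f) - γ * φ f (y e) ^ 2 / (1 + γ * φ e (y e)) := fun f =>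
    hval f ▸ hB''0 _
  refine ⟨fun f _ => hnn f, fun f _ x => ?_, ?_⟩
  · change φ f x ^ 2 ≤ (φ f (y f) - γ * φ f (y e) ^ 2 / (1 + γ * φ e (y e))) * B'' x x
    rw [← hval, ← hrep f x]
    have := LinearMap.BilinForm.apply_mul_apply_le_of_forall_zero_le B'' hB''0 (z f) x
    rwa [hsym'' x, ← sq] at this
  · refine (Finset.sum_le_sum_of_subset_of_nonneg (Finset.erase_subset e R)
      fun f _ _ => hnn f).trans ?_
    rw [Finset.sum_sub_distrib, ← Finset.sum_div, ← Finset.mul_sum]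
    have : η * Ψ ≤ γ * ∑ f ∈ R, φ f (y e) ^ 2 / (1 + γ * φ e (y e)) := by
      rw [← Finset.sum_div, ← mul_div_assoc, le_div_iff₀ hden]
      exact hge
    rw [← Finset.sum_div, ← mul_div_assoc] at this
    linarith

/-- Iterating the barrier step: `k` functionals, taken with the common weight `κ`, control all
the others. -/
lemma Potential.exists_controlling [FiniteDimensional ℝ E] [DecidableEq ι] {φ : ι → E →ₗ[ℝ] ℝ}
    {R : Finset ι} {s : ℝ} {B : E →ₗ[ℝ] E →ₗ[ℝ] ℝ} (h : Potential φ R s B) {κ η : ℝ} (hκ : 0 < κ)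
    (hη : 0 < η) (hηκ : η * (R.card + κ * (2 * s)) ≤ κ) {k : ℕ} (hk : 1 ≤ k * η) :
    ∃ F ⊆ R, F.card ≤ k ∧
      ∀ x, ∑ e ∈ R \ F, φ e x ^ 2 ≤ B x x + κ * ∑ e ∈ F, φ e x ^ 2 := by
  have hηs : η * (2 * s) ≤ 1 := by
    have : (0 : ℝ) ≤ η * R.card := by positivity
    by_contra! hc
    nlinarith
  have key : ∀ j : ℕ, ∃ F ⊆ R, F.card ≤ j ∧ (F = R ∨ Potential φ (R \ F) s
      (B + κ • ∑ e ∈ F, rankOne (φ e) - (j * η) • ∑ e ∈ R \ F, rankOne (φ e))) := by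
    intro j
    induction j with
    | zero =>
      refine ⟨∅, by simp, by simp, Or.inr ?_⟩
      convert h using 1
      · simp
      · ext x y; simp
    | succ j ih =>
      obtain ⟨F, hFR, hFc, hF | hF⟩ := ih
      · exact ⟨F, hFR, by omega, Or.inl hF⟩
      by_cases hne : (R \ F).Nonempty
      swap
      · rw [Finset.not_nonempty_iff_eq_empty, Finset.sdiff_eq_empty_iff_subset] at hne
        exact ⟨F, hFR, by omega, Or.inl (hFR.antisymm hne)⟩
      have hcard : ((R \ F).card : ℝ) ≤ R.card :=
        Nat.cast_le.2 (Finset.card_le_card Finset.sdiff_subset)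
      have hj : (0 : ℝ) ≤ (j + 1) * η := by positivity
      obtain ⟨e, he, hpot⟩ := hF.step hne hη (γ := κ + (j + 1) * η) (by linarith) (by
        have h1 := mul_le_mul_of_nonneg_left hcard hη.le
        have h2 := mul_le_mul_of_nonneg_left hηs hj
        nlinarith)
      obtain ⟨heR, heF⟩ := Finset.mem_sdiff.1 he
      refine ⟨insert e F, Finset.insert_subset heR hFR, ?_, Or.inr ?_⟩
      · rw [Finset.card_insert_of_notMem heF]; omega
      · have hset : R \ insert e F = (R \ F).erase e := by
          ext a; simp only [Finset.mem_sdiff, Finset.mem_insert, Finset.mem_erase]; tauto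
        rw [hset, Finset.sum_insert heF]
        convert hpot using 1
        rw [← Finset.add_sum_erase _ _ he]
        push_cast
        module
  obtain ⟨F, hFR, hFc, hF⟩ := key k
  refine ⟨F, hFR, hFc, fun x => ?_⟩
  have hs : ∀ S : Finset ι, 0 ≤ ∑ e ∈ S, φ e x ^ 2 := fun S =>
    Finset.sum_nonneg fun e _ => sq_nonneg _
  rcases hF with rfl | hF
  · have hB : 0 ≤ B x x := by
      by_cases hx : x = 0
      · simp [hx]
      · exact (h.pos x hx).le
    have := mul_nonneg hκ.le (hs F)
    simp only [Finset.sdiff_self, Finset.sum_empty]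
    linarith
  · have h0 : 0 ≤ B x x + κ * ∑ e ∈ F, φ e x ^ 2 - k * η * ∑ e ∈ R \ F, φ e x ^ 2 := by
      by_cases hx : x = 0
      · simp [hx]
      · have := (hF.pos x hx).le
        simpa [LinearMap.sum_apply, rankOne_apply, sq] using this
    nlinarith [hs (R \ F)]

end Barrier

/-! ### Sparsifiers and Laplacians -/

section Sparsify
variable {V : Type*} [Fintype V] [DecidableEq V]

omit [Fintype V] [DecidableEq V] in
/-- The energy of a vector does not change when a constant is subtracted. -/
lemma energy_sub_const (w : V → V → ℝ) (T : Finset (Sym2 V)) (x : V → ℝ) (c : ℝ) :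
    energy w T (fun v => x v - c) = energy w T x := by
  simp [energy, edgeForm]

/-- The functional `x ↦ √w(a,b) (x a - x b)` of the edge `{a, b}`, for the orientation picked by
`Quot.out`. -/
noncomputable def edgeFun (w : V → V → ℝ) (e : Sym2 V) : (V → ℝ) →ₗ[ℝ] ℝ :=
  √(w (Quot.out e).1 (Quot.out e).2) •
    ((LinearMap.proj (Quot.out e).1 : (V → ℝ) →ₗ[ℝ] ℝ) -
      (LinearMap.proj (Quot.out e).2 : (V → ℝ) →ₗ[ℝ] ℝ))

omit [Fintype V] [DecidableEq V] in
lemma edgeFun_sq {w : V → V → ℝ} (hw : ∀ u v, 0 ≤ w u v) (e : Sym2 V) (x : V → ℝ) :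
    edgeFun w e x ^ 2 = edgeForm w x e := by
  simp [edgeFun, edgeForm, mul_pow, Real.sq_sqrt (hw _ _)]

omit [DecidableEq V] in
lemma sum_out_le {str : V → V → ℝ} (h0 : ∀ u v, 0 ≤ str u v) (R : Finset (Sym2 V)) :
    ∑ e ∈ R, str (Quot.out e).1 (Quot.out e).2 ≤ ∑ u, ∑ v, str u v := by
  classical
  have hinj : Function.Injective (Quot.out : Sym2 V → V × V) := fun e f h => by
    rw [← Quot.out_eq e, ← Quot.out_eq f, h]
  rw [← Fintype.sum_prod_type' (f := str),
    ← Finset.sum_image (g := Quot.out) (f := fun p : V × V => str p.1 p.2) (s := R) hinj.injOn]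
  exact Finset.sum_le_sum_of_subset_of_nonneg (Finset.subset_univ _) fun p _ _ => h0 _ _

/-- A subgraph `T` of low total stretch extends by `k` further edges to a subgraph `H` whose
Laplacian, multiplied by `κ + 1`, dominates that of `M`, when `k κ` is at least `|M| + 2 S`. The
edges are found by `Potential.exists_controlling` for the inner product `κ L_T + J`, with `J` the
all-ones form. -/
lemma exists_sparsifier {w : V → V → ℝ} (hw : ∀ u v, 0 ≤ w u v)
    {M T : Finset (Sym2 V)} (hTM : T ⊆ M) (hT : T.card + 1 ≤ Fintype.card V)
    (hconn : ∀ x, energy w T x = 0 → ∀ u v, x u = x v) {str : V → V → ℝ}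
    (hstr0 : ∀ u v, 0 ≤ str u v)
    (hstr : ∀ u v x, w u v * (x u - x v) ^ 2 ≤ str u v * energy w T x) {S : ℝ}
    (hS : ∑ u, ∑ v, str u v ≤ S) {κ : ℝ} (hκ : 0 < κ) {k : ℕ} (hM : 0 < M.card)
    (hk : M.card + 2 * S ≤ k * κ) :
    ∃ H ⊆ M, H.card + 1 ≤ Fintype.card V + k ∧
      ∀ x, energy w M x ≤ (κ + 1) * energy w H x := by
  have hn : 0 < Fintype.card V := by omega
  have hn' : (0 : ℝ) < Fintype.card V := Nat.cast_pos.2 hn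
  have hM' : (0 : ℝ) < M.card := Nat.cast_pos.2 hM
  have hS0 : 0 ≤ S :=
    (Finset.sum_nonneg fun u _ => Finset.sum_nonneg fun v _ => hstr0 u v).trans hS
  have hsum : ∀ x (F : Finset (Sym2 V)), ∑ e ∈ F, edgeFun w e x ^ 2 = energy w F x :=
    fun x F => Finset.sum_congr rfl fun e _ => edgeFun_sq hw e x
  set σ : (V → ℝ) →ₗ[ℝ] ℝ := ∑ v, LinearMap.proj v with hσ
  have hσa : ∀ x, σ x = ∑ v, x v := fun x => by simp [hσ, LinearMap.sum_apply]
  set B : (V → ℝ) →ₗ[ℝ] (V → ℝ) →ₗ[ℝ] ℝ := κ • ∑ e ∈ T, rankOne (edgeFun w e) + rankOne σ with hB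
  have hBa : ∀ x y, B x y = κ * ∑ e ∈ T, edgeFun w e x * edgeFun w e y + σ x * σ y :=
    fun x y => by simp [hB, LinearMap.sum_apply, rankOne_apply]
  have hBx : ∀ x, B x x = κ * energy w T x + σ x ^ 2 := fun x => by
    rw [hBa, ← hsum]; simp only [sq]
  have hpot : Potential (edgeFun w) (M \ T) (S / κ) B := by
    refine ⟨fun x y => ?_, fun x hx => ?_,
      fun e => str (Quot.out e).1 (Quot.out e).2 / κ, fun e _ => div_nonneg (hstr0 _ _) hκ.le,
      fun e _ x => ?_, ?_⟩
    · rw [hBa, hBa]; simp only [mul_comm]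
    · have h1 := mul_nonneg hκ.le (energy_nonneg hw T x)
      have h2 := sq_nonneg (σ x)
      refine lt_of_le_of_ne (by rw [hBx]; linarith) fun h0 => hx ?_
      rw [hBx] at h0
      have h3 : energy w T x = 0 := by
        have : κ * energy w T x = 0 := by linarith
        exact (mul_eq_zero.1 this).resolve_left hκ.ne'
      have h4 : σ x = 0 := pow_eq_zero_iff two_ne_zero |>.1 (by linarith)
      funext v
      have h5 : σ x = Fintype.card V * x v := by
        rw [hσa, Finset.sum_congr rfl fun u _ => hconn x h3 u v]
        simp
      rw [h4] at h5
      exact (mul_eq_zero.1 h5.symm).resolve_left hn'.ne'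
    · rw [edgeFun_sq hw, hBx]
      have h1 := hstr (Quot.out e).1 (Quot.out e).2 x
      have h2 := div_nonneg (hstr0 (Quot.out e).1 (Quot.out e).2) hκ.le
      have h3 := mul_nonneg h2 (sq_nonneg (σ x))
      have h4 : str (Quot.out e).1 (Quot.out e).2 / κ * (κ * energy w T x) =
        str (Quot.out e).1 (Quot.out e).2 * energy w T x := by field_simp
      rw [mul_add, h4]
      exact h1.trans (by linarith)
    · rw [← Finset.sum_div]
      gcongr
      exact (sum_out_le hstr0 _).trans hS
  have hden : 0 < M.card + 2 * S := by positivity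
  obtain ⟨F, hF, hFc, hFx⟩ := hpot.exists_controlling hκ (η := κ / (M.card + 2 * S))
    (by positivity) (by
      have h1 : ((M \ T).card : ℝ) ≤ M.card :=
        Nat.cast_le.2 (Finset.card_le_card Finset.sdiff_subset)
      have h2 : κ * (2 * (S / κ)) = 2 * S := by field_simp
      rw [h2, div_mul_eq_mul_div, div_le_iff₀ hden]
      exact mul_le_mul_of_nonneg_left (by linarith) hκ.le) (k := k) (by
      rw [← mul_div_assoc, le_div_iff₀ hden]; linarith)
  have hTF : Disjoint T F := Finset.disjoint_left.2 fun e h1 h2 =>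
    (Finset.mem_sdiff.1 (hF h2)).2 h1
  refine ⟨T ∪ F, Finset.union_subset hTM (hF.trans Finset.sdiff_subset), ?_, fun x => ?_⟩
  · rw [Finset.card_union_of_disjoint hTF]; omega
  · -- centring `x` removes the all-ones form
    set c : ℝ := (∑ v, x v) / Fintype.card V with hc
    have h0 : σ (fun v => x v - c) = 0 := by
      rw [hσa, Finset.sum_sub_distrib, hc]
      simp
      field_simp
      simp
    have h1 := hFx fun v => x v - c
    rw [hBx, h0, hsum, hsum, energy_sub_const, energy_sub_const, energy_sub_const] at h1
    have h2 : energy w (T ∪ F) x = energy w T x + energy w F x := Finset.sum_union hTF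
    have h3 : energy w M x = energy w ((M \ T) \ F) x + energy w F x + energy w T x := by
      rw [energy, energy, energy, energy, Finset.sum_sdiff hF, Finset.sum_sdiff hTM]
    rw [h2, h3]
    linarith

/-- Summing over ordered pairs counts every edge twice. -/
lemma sum_pairs {M : Finset (Sym2 V)} (hM : ∀ a, s(a, a) ∉ M) (f : Sym2 V → ℝ) :
    ∑ u, ∑ v, (if s(u, v) ∈ M then f s(u, v) else 0) = 2 * ∑ e ∈ M, f e := by
  rw [← Fintype.sum_prod_type' (f := fun u v => if s(u, v) ∈ M then f s(u, v) else 0),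
    ← Finset.sum_filter, ← Finset.sum_fiberwise_of_maps_to
      (g := fun p : V × V => s(p.1, p.2)) (t := M) (fun p hp => (Finset.mem_filter.1 hp).2),
    Finset.mul_sum]
  refine Finset.sum_congr rfl fun e he => ?_
  induction e with
  | _ a b =>
    have hne : a ≠ b := by rintro rfl; exact hM a he
    have hset : (Finset.univ.filter fun p : V × V => s(p.1, p.2) ∈ M).filter
        (fun p => s(p.1, p.2) = s(a, b)) = {(a, b), (b, a)} := by
      ext ⟨u, v⟩
      simp only [Finset.mem_filter, Finset.mem_univ, true_and, Finset.mem_insert,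
        Finset.mem_singleton, Prod.mk.injEq]
      constructor
      · rintro ⟨-, h⟩
        exact Sym2.eq_iff.1 h
      · intro h
        have := Sym2.eq_iff.2 h
        exact ⟨this ▸ he, this⟩
    rw [hset, Finset.sum_pair (by simp [hne]), Sym2.eq_swap (a := b)]
    ring

/-- The quadratic form of a Laplacian is the energy. -/
lemma dotProduct_lap {w w' : V → V → ℝ} (hsym : ∀ u v, w u v = w v u) {M : Finset (Sym2 V)}
    (hM : ∀ a, s(a, a) ∉ M) {c : ℝ} (hw' : ∀ u v, w' u v = if s(u, v) ∈ M then c * w u v else 0)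
    (x : V → ℝ) :
    x ⬝ᵥ ((Matrix.of fun u v => if u = v then ∑ z, w' u z else - w' u v) *ᵥ x) =
      c * energy w M x := by
  have hs : ∀ u v, w' u v = w' v u := fun u v => by
    rw [hw', hw', hsym u v, Sym2.eq_swap]
  have h0 : ∀ u, w' u u = 0 := fun u => by rw [hw', if_neg (hM u)]
  have h1 : ∀ u, ((Matrix.of fun u v => if u = v then ∑ z, w' u z else - w' u v) *ᵥ x) u =
      ∑ v, w' u v * (x u - x v) := by
    intro u
    have : ∀ v, (if u = v then ∑ z, w' u z else - w' u v) * x v =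
        (if u = v then (∑ z, w' u z) * x v else 0) - w' u v * x v := by
      intro v
      split_ifs with h
      · subst h; rw [h0]; ring
      · ring
    simp only [Matrix.mulVec, dotProduct, Matrix.of_apply, this, Finset.sum_sub_distrib,
      Finset.sum_ite_eq, Finset.mem_univ, if_true, mul_sub, Finset.sum_mul]
  have h2 : ∑ u, ∑ v, w' u v * (x u - x v) ^ 2 = 2 * (c * energy w M x) := by
    rw [energy, Finset.mul_sum, ← sum_pairs hM]
    refine Finset.sum_congr rfl fun u _ => Finset.sum_congr rfl fun v _ => ?_
    rw [hw', edgeForm_mk hsym]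
    split_ifs <;> ring
  have h3 : ∑ u, ∑ v, w' u v * (x u - x v) ^ 2 =
      2 * ∑ u, ∑ v, x u * (w' u v * (x u - x v)) := by
    have h4 : ∑ u, ∑ v, x u * (w' u v * (x u - x v)) = ∑ u, ∑ v, x v * (w' u v * (x v - x u)) := by
      rw [Finset.sum_comm]
      exact Finset.sum_congr rfl fun u _ => Finset.sum_congr rfl fun v _ => by rw [hs]
    rw [two_mul]
    nth_rewrite 2 [h4]
    simp only [← Finset.sum_add_distrib]
    exact Finset.sum_congr rfl fun u _ => Finset.sum_congr rfl fun v _ => by ring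
  simp only [dotProduct, h1, Finset.mul_sum]
  linarith

end Sparsify

/-! ### Counting edges -/

lemma one_le_log {n : ℕ} (hn : 3 ≤ n) : 1 ≤ Real.log n := by
  have h3 : (3 : ℝ) ≤ n := by exact_mod_cast hn
  rw [Real.le_log_iff_exp_le (by linarith)]
  linarith [Real.exp_one_lt_d9]

lemma log_log_three_pos : 0 < Real.log (Real.log 3) := by
  apply Real.log_pos
  rw [Real.lt_log_iff_exp_lt (by norm_num)]
  linarith [Real.exp_one_lt_d9]

/-- The factor `(log log n) ^ 4` is bounded below, so a bound without it suffices. -/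
lemma log_log_bound {n : ℕ} (hn : 3 ≤ n) {X : ℝ} (hX : 0 ≤ X) :
    X ≤ X / Real.log (Real.log 3) ^ 4 * Real.log (Real.log n) ^ 4 := by
  have h3 : (3 : ℝ) ≤ n := by exact_mod_cast hn
  have hp := log_log_three_pos
  have hl3 : 0 < Real.log 3 := Real.log_pos (by norm_num)
  have h1 : Real.log (Real.log 3) ≤ Real.log (Real.log n) :=
    Real.log_le_log hl3 (Real.log_le_log (by norm_num) h3)
  rw [div_mul_eq_mul_div, le_div_iff₀ (by positivity)]
  gcongr

lemma natLog_le {n N : ℕ} (hn : 3 ≤ n) (hN : N ≤ n ^ 2) : (Nat.log 2 N : ℝ) ≤ 3 * Real.log n := by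
  have hl := one_le_log hn
  have hlog2 := Real.log_two_gt_d9
  have h1 : (Nat.log 2 N : ℝ) ≤ Nat.log 2 (n ^ 2) := Nat.cast_le.2 (Nat.log_mono_right hN)
  have h2 := Real.natLog_le_logb (n ^ 2) 2
  rw [Real.logb] at h2
  push_cast at h2
  rw [Real.log_pow, le_div_iff₀ (by linarith)] at h2
  push_cast at h2
  have h3 : (0 : ℝ) ≤ Nat.log 2 (n ^ 2) := Nat.cast_nonneg _
  nlinarith

/-- The number of extra edges, in the form in which it is compared with the claimed bound. -/
lemma count_bound {n m : ℕ} (hn : 3 ≤ n) (hm : 2 * m ≤ n ^ 2) {κ : ℝ} (hκ : 1 ≤ κ) (hκm : κ ≤ m) :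
    (m + 2 * (2048 * (Nat.log 2 (2 * m) + 1 : ℕ) * (2 * m * Nat.log 2 (2 * m) : ℕ))) / κ + 1 ≤
      98306 * (m / κ) * Real.log n ^ 2 := by
  have hl := one_le_log hn
  set l := Real.log n with hldef
  set b : ℝ := ((Nat.log 2 (2 * m) : ℕ) : ℝ) with hb
  have hlog : b ≤ 3 * l := natLog_le hn hm
  have hb0 : 0 ≤ b := Nat.cast_nonneg _
  have hκ0 : 0 < κ := by linarith
  have hm0 : (0 : ℝ) ≤ m := Nat.cast_nonneg _
  push_cast
  rw [← hb]
  have h1 : (b + 1) * b ≤ 12 * l ^ 2 := by nlinarith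
  have h2 : (m : ℝ) ≤ m * l ^ 2 := by nlinarith [one_le_pow₀ hl (n := 2)]
  have h3 : (1 : ℝ) = κ / κ := (div_self hκ0.ne').symm
  rw [h3, ← add_div, mul_div_assoc', div_mul_eq_mul_div]
  gcongr
  nlinarith [mul_le_mul_of_nonneg_left h1 hm0]

end IncSparse

open IncSparse

/-- incremental sparsifier, Theorem `th:incrementalsparsify`.  Every
connected weighted graph with `n ≥ 3` vertices, `m` edges and Laplacian `L` admits, for any
`1 ≤ κ ≤ m`, a weighted subgraph `w'` with at most
`n − 1 + C·(m/κ)·(log n)²·(log log n)⁴` edges whose Laplacian `L'` satisfies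
`L ⪯ L' ⪯ 3κ·L`. -/
theorem incremental_sparsifier :
    ∃ C : ℝ, 0 < C ∧
      ∀ (V : Type) [Fintype V] [DecidableEq V]
        (w : V → V → ℝ) (hsym : ∀ u v, w u v = w v u),
        (∀ u v, 0 ≤ w u v) → (∀ u, w u u = 0) →
        ∀ (G : SimpleGraph V), (∀ u v, G.Adj u v ↔ 0 < w u v) → G.Connected →
        ∀ n m : ℕ, Fintype.card V = n → 3 ≤ n → m = G.edgeSet.ncard →
        ∀ κ : ℝ, 1 ≤ κ → κ ≤ m →
        ∀ L : Matrix V V ℝ,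
          L = Matrix.of (fun u v => if u = v then ∑ x, w u x else - w u v) →
        ∃ (w' : V → V → ℝ) (hsym' : ∀ u v, w' u v = w' v u),
          (∀ u v, 0 ≤ w' u v) ∧ (∀ u, w' u u = 0) ∧
          (∀ u v, 0 < w' u v → 0 < w u v) ∧
          (({e : Sym2 V | 0 < Sym2.lift ⟨w', hsym'⟩ e}.ncard : ℝ)
            ≤ (n : ℝ) - 1 + C * ((m : ℝ) / κ) * Real.log n ^ 2
                * Real.log (Real.log n) ^ 4) ∧
          (let L' : Matrix V V ℝ :=
            Matrix.of (fun u v => if u = v then ∑ x, w' u x else - w' u v)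
           (L' - L).PosSemidef ∧ ((3 * κ) • L - L').PosSemidef) := by
  classical
  have hll := log_log_three_pos
  refine ⟨98306 / Real.log (Real.log 3) ^ 4, by positivity, ?_⟩
  intro V _ _ w hsym hw hirr G hG hconn n m hn hn3 hm κ hκ hκm L hL
  have hκ0 : 0 < κ := by linarith
  set M : Finset (Sym2 V) := G.edgeSet.toFinset with hM
  have hmM : ∀ a b, s(a, b) ∈ M ↔ 0 < w a b := fun a b => by simp [hM, hG]
  have hMd : ∀ a, s(a, a) ∉ M := fun a => by simp [hmM, hirr]
  have hMc : M.card = m := by rw [hm, Set.ncard_eq_toFinset_card']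
  have hN : numPairs w Finset.univ Finset.univ = 2 * m := by
    have h1 := sum_pairs hMd fun _ => 1
    simp only [hmM, Finset.sum_const, hMc, nsmul_eq_mul, mul_one] at h1
    rw [numPairs_eq]
    exact_mod_cast h1
  have hNn : 2 * m ≤ n ^ 2 := by
    rw [← hN, numPairs]
    refine (Finset.card_filter_le _ _).trans ?_
    rw [Finset.card_product, Finset.card_univ, hn, sq]
  obtain ⟨T, hTadj, hTc, hTconn, str, hstr0, hstr, hstrS⟩ :=
    exists_lowStretch_tree hsym hw hirr hG hconn hN
  have hTM : T ⊆ M := by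
    intro e he
    induction e with
    | _ a b => exact (hmM a b).2 (hTadj a b he)
  set S : ℝ := 2048 * (Nat.log 2 (2 * m) + 1 : ℕ) * (2 * m * Nat.log 2 (2 * m) : ℕ) with hS
  have hS0 : 0 ≤ S := by positivity
  have hm0 : (0 : ℝ) < m := by linarith
  obtain ⟨H, hHM, hHc, hHx⟩ := exists_sparsifier hw hTM hTc hTconn hstr0 hstr hstrS hκ0
    (k := ⌈(m + 2 * S) / κ⌉₊) (by rw [hMc]; exact_mod_cast hm0)
    (by rw [hMc, ← div_le_iff₀ hκ0]; exact Nat.le_ceil _)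
  have hHd : ∀ a, s(a, a) ∉ H := fun a h => hMd a (hHM h)
  set w' : V → V → ℝ := fun u v => if s(u, v) ∈ H then (κ + 1) * w u v else 0 with hw'
  have hsym' : ∀ u v, w' u v = w' v u := fun u v => by
    simp only [hw', hsym u v, Sym2.eq_swap (a := u)]
  have hmem : ∀ u v, 0 < w' u v → s(u, v) ∈ H := fun u v h => by
    by_contra hc
    simp [hw', hc] at h
  refine ⟨w', hsym', fun u v => ?_, fun u => ?_, fun u v h => (hmM u v).1 (hHM (hmem u v h)),
    ?_, ?_⟩
  · simp only [hw']
    split_ifs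
    · exact mul_nonneg (by linarith) (hw u v)
    · exact le_rfl
  · simp only [hw', if_neg (hHd u)]
  · have hsub : {e : Sym2 V | 0 < Sym2.lift ⟨w', hsym'⟩ e} ⊆ (H : Set (Sym2 V)) := by
      intro e he
      induction e with
      | _ a b => exact hmem a b he
    have h1 := Set.ncard_le_ncard hsub (Finset.finite_toSet H)
    rw [Set.ncard_coe_finset] at h1
    have h2 : ({e : Sym2 V | 0 < Sym2.lift ⟨w', hsym'⟩ e}.ncard : ℝ) + 1 ≤
        n + ⌈(m + 2 * S) / κ⌉₊ := by
      rw [← hn]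
      exact_mod_cast (Nat.succ_le_succ h1).trans hHc
    have h3 : (⌈(m + 2 * S) / κ⌉₊ : ℝ) ≤ (m + 2 * S) / κ + 1 :=
      (Nat.ceil_lt_add_one (by positivity)).le
    have h4 := h3.trans (count_bound hn3 hNn hκ hκm)
    have h5 := h4.trans (log_log_bound hn3 (by positivity))
    have h6 : 98306 * ((m : ℝ) / κ) * Real.log n ^ 2 / Real.log (Real.log 3) ^ 4 =
        98306 / Real.log (Real.log 3) ^ 4 * (m / κ) * Real.log n ^ 2 := by ring
    rw [h6] at h5
    linarith
  · intro L'
    have hwM : ∀ u v, w u v = if s(u, v) ∈ M then 1 * w u v else 0 := fun u v => by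
      split_ifs with h
      · ring
      · exact le_antisymm (not_lt.1 fun hc => h ((hmM u v).2 hc)) (hw u v)
    have hLx : ∀ x : V → ℝ, x ⬝ᵥ (L *ᵥ x) = energy w M x := fun x => by
      rw [hL, dotProduct_lap hsym hMd hwM, one_mul]
    have hLx' : ∀ x : V → ℝ, x ⬝ᵥ (L' *ᵥ x) = (κ + 1) * energy w H x := fun x =>
      dotProduct_lap hsym hHd (fun u v => rfl) x
    have hherm : ∀ f : V → V → ℝ, (∀ u v, f u v = f v u) →
        (Matrix.of fun u v => if u = v then ∑ x, f u x else - f u v).IsHermitian := by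
      intro f hf
      ext u v
      by_cases h : u = v
      · subst h; simp
      · simp [h, Ne.symm h, hf u v]
    have hLh : L.IsHermitian := hL ▸ hherm w hsym
    have hLh' : L'.IsHermitian := hherm w' hsym'
    constructor
    · refine .of_dotProduct_mulVec_nonneg (hLh'.sub hLh) fun x => ?_
      rw [star_trivial, sub_mulVec, dotProduct_sub, hLx, hLx', sub_nonneg]
      exact hHx x
    · refine .of_dotProduct_mulVec_nonneg ?_ fun x => ?_
      · refine Matrix.IsHermitian.sub ?_ hLh'
        ext u v
        simp [← hLh.apply u v]
      · rw [star_trivial, sub_mulVec, dotProduct_sub, smul_mulVec, dotProduct_smul, hLx, hLx',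
          smul_eq_mul, sub_nonneg]
        have h1 := energy_mono hw hHM x
        have h2 := energy_nonneg hw H x
        nlinarith
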